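/- arXiv:math/9912221 — 4 statements merged into one kernel-verified Lean document; each statement's English description precedes it below -/
import Mathlib

section
/- A ring R is left coherent if and only if the wide subcategory of left R-modules generated by R consists exactly of the finitely presented R-modules. -/
open CategoryTheory CategoryTheory.Limits CategoryTheory.Pretriangulated ZeroObject

universe w u

/-- A full subcategory (given as a set of objects) of an abelian category is *wide*
if it is closed under isomorphisms, kernels, cokernels and extensions. -/
structure IsWideSubcategory {A : Type*} [Category A] [Abelian A] (C : Set A) : Prop where
  mem_of_iso : ∀ {X Y : A}, (X ≅ Y) → X ∈ C → Y ∈ C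
  kernel_mem : ∀ {X Y : A} (f : X ⟶ Y), X ∈ C → Y ∈ C → kernel f ∈ C
  cokernel_mem : ∀ {X Y : A} (f : X ⟶ Y), X ∈ C → Y ∈ C → cokernel f ∈ C
  extension_mem : ∀ (S : CategoryTheory.ShortComplex A), S.ShortExact →
    S.X₁ ∈ C → S.X₃ ∈ C → S.X₂ ∈ C

/-- The wide subcategory generated by a set of objects: the intersection of all
wide subcategories containing it. -/
def wideClosure {A : Type*} [Category A] [Abelian A] (S : Set A) : Set A :=
  ⋂₀ {C : Set A | IsWideSubcategory C ∧ S ⊆ C}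

/-- `C₀`, the wide subcategory of `R`-modules generated by the module `R`. -/
def wideSubcatGenByRing (R : Type u) [Ring R] : Set (ModuleCat.{u} R) :=
  wideClosure {ModuleCat.of R R}

/-- A ring is left coherent if every finitely generated left ideal is finitely
presented as a module. -/
def IsLeftCoherentRing (R : Type u) [Ring R] : Prop :=
  ∀ I : Ideal R, I.FG → Module.FinitePresentation R I

/-- The collection of finitely presented `R`-modules. -/
def finPresModules (R : Type u) [Ring R] : Set (ModuleCat.{u} R) :=
  {M : ModuleCat.{u} R | Module.FinitePresentation R M}

lemma aux_pi {R : Type u} [Ring R] (hR : IsLeftCoherentRing R) (n : ℕ) :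
    ∀ (M : Type u) [AddCommGroup M] [Module R M] [Module.Finite R M]
      (g : M →ₗ[R] (Fin n → R)), Function.Injective g → Module.FinitePresentation R M := by
  induction n with
  | zero =>
    intro M _ _ _ g hg
    exact Module.FinitePresentation.of_equiv
      (LinearEquiv.ofBijective g ⟨hg, fun y => ⟨0, Subsingleton.elim _ _⟩⟩).symm
  | succ n ih =>
    intro M _ _ _ g hg
    let p : M →ₗ[R] R := (LinearMap.proj 0).comp g
    have h1 : Module.FinitePresentation R (LinearMap.range p) :=
      hR _ (Module.Finite.iff_fg.mp (Module.Finite.range p))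
    have hs := LinearMap.surjective_rangeRestrict p
    have h2 : Module.Finite R (LinearMap.ker p.rangeRestrict) :=
      Module.Finite.of_fg (Module.FinitePresentation.fg_ker p.rangeRestrict hs)
    have h3 : Module.FinitePresentation R (LinearMap.ker p.rangeRestrict) := by
      refine ih _ (((LinearMap.funLeft R R Fin.succ).comp g).comp (Submodule.subtype _)) ?_
      rw [← LinearMap.ker_eq_bot, LinearMap.ker_eq_bot']
      rintro ⟨x, hx⟩ h
      have hx0 : g x 0 = 0 := by
        have : p x = 0 := by simpa using hx
        exact this
      have : g x = 0 := by
        ext i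
        refine Fin.cases hx0 (fun j => ?_) i
        exact congrFun h j
      ext
      exact hg (by simpa using this)
    exact Module.finitePresentation_of_ker p.rangeRestrict hs

lemma aux_sub {R : Type u} [Ring R] (hR : IsLeftCoherentRing R)
    (N : Type u) [AddCommGroup N] [Module R N] [Module.FinitePresentation R N]
    (L : Submodule R N) (hL : L.FG) : Module.FinitePresentation R L := by
  obtain ⟨n, m, f, g, hf, hfg⟩ := Module.FinitePresentation.exists_fin' R N
  have hK : (LinearMap.ker f).FG := Module.FinitePresentation.fg_ker f hf
  have hP : (L.comap f).FG := by
    refine Submodule.fg_of_fg_map_of_fg_inf_ker f ?_ ?_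
    · rwa [Submodule.map_comap_eq_of_surjective hf]
    · rwa [inf_eq_right.mpr (LinearMap.ker_le_comap f)]
  have : Module.Finite R (L.comap f) := Module.Finite.of_fg hP
  have h1 : Module.FinitePresentation R (L.comap f) :=
    aux_pi hR n _ (Submodule.subtype _) (Submodule.subtype_injective _)
  let q : L.comap f →ₗ[R] L := f.restrict (fun x hx => hx)
  have hq : Function.Surjective q := by
    rintro ⟨y, hy⟩
    obtain ⟨x, rfl⟩ := hf y
    exact ⟨⟨x, hy⟩, rfl⟩
  refine Module.finitePresentation_of_surjective q hq ?_
  refine Submodule.fg_of_fg_map_injective (Submodule.subtype _)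
    (Submodule.subtype_injective _) ?_
  convert hK
  ext x
  constructor
  · rintro ⟨y, hy, rfl⟩
    exact congrArg Subtype.val hy
  · intro hx
    have hx' : f x = 0 := hx
    exact ⟨⟨x, by simp [hx']⟩, Subtype.ext hx', rfl⟩

lemma aux_wide {R : Type u} [Ring R] (hR : IsLeftCoherentRing R) :
    IsWideSubcategory (finPresModules R) where
  mem_of_iso e h := by
    have : Module.FinitePresentation R _ := h
    exact Module.FinitePresentation.of_equiv e.toLinearEquiv
  kernel_mem {X Y} f hX hY := by
    have : Module.FinitePresentation R X := hX
    have : Module.FinitePresentation R Y := hY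
    have h1 := aux_sub hR Y (LinearMap.range f.hom)
      (Module.Finite.iff_fg.mp (Module.Finite.range f.hom))
    have h2 := Module.FinitePresentation.fg_ker f.hom.rangeRestrict
      (LinearMap.surjective_rangeRestrict _)
    rw [LinearMap.ker_rangeRestrict] at h2
    have h3 := aux_sub hR X _ h2
    exact Module.FinitePresentation.of_equiv (ModuleCat.kernelIsoKer f).symm.toLinearEquiv
  cokernel_mem {X Y} f hX hY := by
    have : Module.FinitePresentation R X := hX
    have : Module.FinitePresentation R Y := hY
    have h1 : Module.FinitePresentation R (Y ⧸ LinearMap.range f.hom) := by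
      refine Module.finitePresentation_of_surjective (Submodule.mkQ _)
        (Submodule.mkQ_surjective _) ?_
      rw [Submodule.ker_mkQ]
      exact Module.Finite.iff_fg.mp (Module.Finite.range f.hom)
    exact Module.FinitePresentation.of_equiv
      (ModuleCat.cokernelIsoRangeQuotient f).symm.toLinearEquiv
  extension_mem S hS h1 h3 := by
    have : Module.FinitePresentation R S.X₁ := h1
    have : Module.FinitePresentation R S.X₃ := h3
    have hs : Function.Surjective S.g.hom := hS.moduleCat_surjective_g
    have hi : Function.Injective S.f.hom := hS.moduleCat_injective_f
    have he : LinearMap.range S.f.hom = LinearMap.ker S.g.hom :=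
      hS.exact.moduleCat_range_eq_ker
    have h4 : Module.FinitePresentation R (LinearMap.ker S.g.hom) := by
      rw [← he]
      exact Module.FinitePresentation.of_equiv (LinearEquiv.ofInjective _ hi)
    exact Module.finitePresentation_of_ker S.g.hom hs

lemma aux_free {R : Type u} [Ring R] {C : Set (ModuleCat.{u} R)} (hC : IsWideSubcategory C)
    (h : ModuleCat.of R R ∈ C) (n : ℕ) : ModuleCat.of R (Fin n → R) ∈ C := by
  induction n with
  | zero =>
    have h0 := hC.kernel_mem (𝟙 (ModuleCat.of R R)) h h
    refine hC.mem_of_iso ?_ h0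
    refine IsZero.iso (isZero_kernel_of_mono _) (ModuleCat.isZero_of_subsingleton _)
  | succ n ih =>
    let f : R →ₗ[R] (Fin (n+1) → R) := LinearMap.single R (fun _ => R) 0
    let g : (Fin (n+1) → R) →ₗ[R] (Fin n → R) := LinearMap.funLeft R R Fin.succ
    have hfg : g ∘ₗ f = 0 := by
      ext i
      simp [f, g, LinearMap.funLeft]
    let S : ShortComplex (ModuleCat.{u} R) :=
      ShortComplex.mk (ModuleCat.ofHom f) (ModuleCat.ofHom g) (by
        rw [← ModuleCat.ofHom_comp, hfg]; rfl)
    have hf : Function.Injective f := Pi.single_injective (M := fun _ : Fin (n+1) => R) 0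
    have hg : Function.Surjective g :=
      LinearMap.funLeft_surjective_of_injective _ _ _ (Fin.succ_injective n)
    refine hC.extension_mem S ?_ h ih
    have : Mono S.f := (ModuleCat.mono_iff_injective _).mpr hf
    have : Epi S.g := (ModuleCat.epi_iff_surjective _).mpr hg
    refine ⟨(ShortComplex.moduleCat_exact_iff _).mpr ?_⟩
    intro x hx
    refine ⟨(x : Fin (n+1) → R) 0, ?_⟩
    change f ((x : Fin (n+1) → R) 0) = x
    ext i
    refine Fin.cases ?_ (fun j => ?_) i
    · simp [f]
    · have : (x : Fin (n+1) → R) j.succ = 0 := congrFun hx j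
      simp [f, this]

lemma aux_fp_mem {R : Type u} [Ring R] {C : Set (ModuleCat.{u} R)} (hC : IsWideSubcategory C)
    (h : ModuleCat.of R R ∈ C) (M : ModuleCat.{u} R) [Module.FinitePresentation R M] :
    M ∈ C := by
  obtain ⟨n, m, f, g, hf, hfg⟩ := Module.FinitePresentation.exists_fin' R M
  have h1 := hC.cokernel_mem (ModuleCat.ofHom g) (aux_free hC h m) (aux_free hC h n)
  refine hC.mem_of_iso ?_ h1
  refine ModuleCat.cokernelIsoRangeQuotient _ ≪≫ LinearEquiv.toModuleIso ?_
  refine (Submodule.quotEquivOfEq _ _ ?_).trans (f.quotKerEquivOfSurjective hf)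
  exact (LinearMap.exact_iff.mp hfg).symm

lemma aux_closure_wide {A : Type*} [Category A] [Abelian A] (S : Set A) :
    IsWideSubcategory (wideClosure S) where
  mem_of_iso e h := fun C hC => hC.1.mem_of_iso e (h C hC)
  kernel_mem f h h' := fun C hC => hC.1.kernel_mem f (h C hC) (h' C hC)
  cokernel_mem f h h' := fun C hC => hC.1.cokernel_mem f (h C hC) (h' C hC)
  extension_mem T hT h h' := fun C hC => hC.1.extension_mem T hT (h C hC) (h' C hC)

/-- Lemma 1.6: a ring `R` is left coherent if and only if the wide
subcategory generated by `R` consists exactly of the finitely presented modules. -/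
theorem coherent_iff_wideClosure_eq_finPres (R : Type u) [Ring R] :
    IsLeftCoherentRing R ↔ wideSubcatGenByRing R = finPresModules R := by
  constructor
  · intro hR
    apply Set.Subset.antisymm
    · refine Set.sInter_subset_of_mem ⟨aux_wide hR, ?_⟩
      rintro _ rfl
      exact (inferInstance : Module.FinitePresentation R R)
    · intro M hM C hC
      have : Module.FinitePresentation R M := hM
      exact aux_fp_mem hC.1 (hC.2 rfl) M
  · intro h I hI
    have hw : IsWideSubcategory (finPresModules R) := by
      rw [← h]; exact aux_closure_wide _
    have hq : Module.FinitePresentation R (R ⧸ I) :=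
      Module.finitePresentation_of_surjective (Submodule.mkQ I)
        (Submodule.mkQ_surjective _) (by rwa [Submodule.ker_mkQ])
    have hk : Module.FinitePresentation R
        (kernel (ModuleCat.ofHom (Submodule.mkQ I)) : ModuleCat.{u} R) :=
      hw.kernel_mem (ModuleCat.ofHom (Submodule.mkQ I))
        (inferInstance : Module.FinitePresentation R R) hq
    have hk' : Module.FinitePresentation R (LinearMap.ker (Submodule.mkQ I)) :=
      Module.FinitePresentation.of_equiv
        (ModuleCat.kernelIsoKer (ModuleCat.ofHom (Submodule.mkQ I))).toLinearEquiv
    exact Module.FinitePresentation.of_equiv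
      (LinearEquiv.ofEq _ _ (Submodule.ker_mkQ I))
end

section
/- Let R be a commutative ring. Then the map f from the lattice of wide subcategories of C_0 to the lattice of thick subcategories of small objects of D(R) is surjective; equivalently, for every thick subcategory D of small objects of D(R) one has fg(D) = D. -/
open CategoryTheory CategoryTheory.Limits CategoryTheory.Pretriangulated ZeroObject

universe w u

/-- A thick subcategory of a (pre)triangulated category: a full triangulated
subcategory closed under retracts (direct summands). -/
structure IsThickSubcategory {T : Type*} [Category T] [HasZeroObject T] [Preadditive T]
    [HasShift T ℤ] [∀ n : ℤ, (shiftFunctor T n).Additive] [Pretriangulated T]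
    (D : Set T) : Prop where
  mem_of_iso : ∀ {X Y : T}, (X ≅ Y) → X ∈ D → Y ∈ D
  zero_mem : (0 : T) ∈ D
  shift_mem : ∀ (X : T) (n : ℤ), X ∈ D → X⟦n⟧ ∈ D
  ext₂ : ∀ (T' : Triangle T), T' ∈ (distTriang T) → T'.obj₁ ∈ D → T'.obj₃ ∈ D → T'.obj₂ ∈ D
  retract_mem : ∀ (X Y : T) (i : X ⟶ Y) (r : Y ⟶ X), i ≫ r = 𝟙 X → Y ∈ D → X ∈ D

/-- An object of the derived category of `R`-modules is *small* if it belongs to every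
thick subcategory containing the complex `S⁰R` (`R` concentrated in degree `0`), i.e. to
the thick subcategory generated by `S⁰R`; equivalently, `Hom(X,-)` commutes with
arbitrary direct sums. -/
def IsSmallObject {R : Type u} [Ring R] [HasDerivedCategory.{w} (ModuleCat.{u} R)]
    (X : DerivedCategory (ModuleCat.{u} R)) : Prop :=
  ∀ D : Set (DerivedCategory (ModuleCat.{u} R)), IsThickSubcategory D →
    (DerivedCategory.singleFunctor (ModuleCat.{u} R) 0).obj (ModuleCat.of R R) ∈ D → X ∈ D

/-- The map `f` : it sends a wide subcategory `C` to the collection of small objects `X`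
of the derived category such that `Hₙ X ∈ C` for all `n`. -/
def fSet {R : Type u} [Ring R] [HasDerivedCategory.{w} (ModuleCat.{u} R)]
    (C : Set (ModuleCat.{u} R)) : Set (DerivedCategory (ModuleCat.{u} R)) :=
  {X | IsSmallObject X ∧
    ∀ n : ℤ, (DerivedCategory.homologyFunctor (ModuleCat.{u} R) n).obj X ∈ C}

/-- The map `g` : it sends a thick subcategory `D` to the wide subcategory generated by
the homology modules `Hₙ X` for `X ∈ D` and `n : ℤ`. -/
def gSet {R : Type u} [Ring R] [HasDerivedCategory.{w} (ModuleCat.{u} R)]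
    (D : Set (DerivedCategory (ModuleCat.{u} R))) : Set (ModuleCat.{u} R) :=
  wideClosure {M | ∃ X ∈ D, ∃ n : ℤ,
    Nonempty ((DerivedCategory.homologyFunctor (ModuleCat.{u} R) n).obj X ≅ M)}

/-! ## Part 1: generalities in linear triangulated categories -/

set_option linter.unusedSectionVars false

section Abstract

variable {T : Type*} [Category T] [HasZeroObject T] [Preadditive T]
    [HasShift T ℤ] [∀ n : ℤ, (shiftFunctor T n).Additive] [Pretriangulated T]

lemma IsThickSubcategory.ext₃ {D : Set T} (hD : IsThickSubcategory D)
    (T' : Triangle T) (hT : T' ∈ distTriang T) (h₁ : T'.obj₁ ∈ D) (h₂ : T'.obj₂ ∈ D) :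
    T'.obj₃ ∈ D :=
  hD.ext₂ _ (rot_of_distTriang _ hT) h₂ (hD.shift_mem _ _ h₁)

lemma IsThickSubcategory.ext₁ {D : Set T} (hD : IsThickSubcategory D)
    (T' : Triangle T) (hT : T' ∈ distTriang T) (h₂ : T'.obj₂ ∈ D) (h₃ : T'.obj₃ ∈ D) :
    T'.obj₁ ∈ D :=
  hD.ext₂ _ (inv_rot_of_distTriang _ hT) (hD.shift_mem _ _ h₃) h₂

lemma IsThickSubcategory.biprod {D : Set T} (hD : IsThickSubcategory D)
    {X Y : T} (hX : X ∈ D) (hY : Y ∈ D) : (X ⊞ Y) ∈ D :=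
  hD.ext₂ _ (binaryBiproductTriangle_distinguished X Y) hX hY

/-- A morphism factors through an object of `D`. -/
def Fac (D : Set T) {X Y : T} (φ : X ⟶ Y) : Prop :=
  ∃ d ∈ D, ∃ (a : X ⟶ d) (b : d ⟶ Y), a ≫ b = φ

lemma Fac.zero {D : Set T} (hD : IsThickSubcategory D) (X Y : T) : Fac D (0 : X ⟶ Y) :=
  ⟨0, hD.zero_mem, 0, 0, by simp⟩

lemma Fac.add {D : Set T} (hD : IsThickSubcategory D) {X Y : T} {φ ψ : X ⟶ Y}
    (h : Fac D φ) (h' : Fac D ψ) : Fac D (φ + ψ) := by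
  obtain ⟨d, hd, a, b, rfl⟩ := h
  obtain ⟨d', hd', a', b', rfl⟩ := h'
  exact ⟨d ⊞ d', hD.biprod hd hd', biprod.lift a a', biprod.desc b b', by simp⟩

lemma Fac.sum {D : Set T} (hD : IsThickSubcategory D) {X Y : T} {ι : Type*} (s : Finset ι)
    (φ : ι → (X ⟶ Y)) (h : ∀ i ∈ s, Fac D (φ i)) : Fac D (∑ i ∈ s, φ i) := by
  classical
  induction s using Finset.induction_on with
  | empty => simpa using Fac.zero hD X Y
  | insert i s hi ih =>
    rw [Finset.sum_insert hi]
    exact Fac.add hD (h i (by simp)) (ih fun j hj => h j (by simp [hj]))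

lemma Fac.comp_right {D : Set T} {X Y Z : T} {φ : X ⟶ Y} (h : Fac D φ) (ψ : Y ⟶ Z) :
    Fac D (φ ≫ ψ) := by
  obtain ⟨d, hd, a, b, rfl⟩ := h
  exact ⟨d, hd, a, b ≫ ψ, by simp⟩

lemma Fac.comp_left {D : Set T} {X Y Z : T} {φ : Y ⟶ Z} (h : Fac D φ) (ψ : X ⟶ Y) :
    Fac D (ψ ≫ φ) := by
  obtain ⟨d, hd, a, b, rfl⟩ := h
  exact ⟨d, hd, ψ ≫ a, b, by simp⟩

lemma yo2 {X Y Z A : T} {u : X ⟶ Y} {v : Y ⟶ Z} {w : Z ⟶ X⟦(1 : ℤ)⟧}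
    (hT : Triangle.mk u v w ∈ distTriang T) (f : Y ⟶ A) (hf : u ≫ f = 0) :
    ∃ g : Z ⟶ A, f = v ≫ g := Triangle.yoneda_exact₂ _ hT f hf

lemma yo3 {X Y Z A : T} {u : X ⟶ Y} {v : Y ⟶ Z} {w : Z ⟶ X⟦(1 : ℤ)⟧}
    (hT : Triangle.mk u v w ∈ distTriang T) (f : Z ⟶ A) (hf : v ≫ f = 0) :
    ∃ g : X⟦(1 : ℤ)⟧ ⟶ A, f = w ≫ g := Triangle.yoneda_exact₃ _ hT f hf

lemma coyo2 {X Y Z A : T} {u : X ⟶ Y} {v : Y ⟶ Z} {w : Z ⟶ X⟦(1 : ℤ)⟧}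
    (hT : Triangle.mk u v w ∈ distTriang T) (f : A ⟶ Y) (hf : f ≫ v = 0) :
    ∃ g : A ⟶ X, f = g ≫ u := Triangle.coyoneda_exact₂ _ hT f hf

lemma coyo3 {X Y Z A : T} {u : X ⟶ Y} {v : Y ⟶ Z} {w : Z ⟶ X⟦(1 : ℤ)⟧}
    (hT : Triangle.mk u v w ∈ distTriang T) (f : A ⟶ Z) (hf : f ≫ w = 0) :
    ∃ g : A ⟶ Y, f = g ≫ v := Triangle.coyoneda_exact₃ _ hT f hf

lemma tri12 {X Y Z : T} {u : X ⟶ Y} {v : Y ⟶ Z} {w : Z ⟶ X⟦(1 : ℤ)⟧}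
    (hT : Triangle.mk u v w ∈ distTriang T) : u ≫ v = 0 := comp_distTriang_mor_zero₁₂ _ hT

lemma tri23 {X Y Z : T} {u : X ⟶ Y} {v : Y ⟶ Z} {w : Z ⟶ X⟦(1 : ℤ)⟧}
    (hT : Triangle.mk u v w ∈ distTriang T) : v ≫ w = 0 := comp_distTriang_mor_zero₂₃ _ hT

lemma tri31 {X Y Z : T} {u : X ⟶ Y} {v : Y ⟶ Z} {w : Z ⟶ X⟦(1 : ℤ)⟧}
    (hT : Triangle.mk u v w ∈ distTriang T) : w ≫ u⟦(1 : ℤ)⟧' = 0 :=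
  comp_distTriang_mor_zero₃₁ _ hT

/-- Homotopy pushouts. -/
lemma exists_hpushout [IsTriangulated T] {D : Set T} (hD : IsThickSubcategory D)
    {W' W C : T} {u : W' ⟶ W} {v : W ⟶ C} {w : C ⟶ W'⟦(1 : ℤ)⟧}
    (hT : Triangle.mk u v w ∈ distTriang T) (hC : C ∈ D)
    {d : T} (hd : d ∈ D) (γ : W' ⟶ d) :
    ∃ P ∈ D, ∃ (j : W ⟶ P),
      ∀ (A : T) (x : W ⟶ A) (y : d ⟶ A), u ≫ x = γ ≫ y → ∃ z, j ≫ z = x := by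
  obtain ⟨P, q, r, hP⟩ := distinguished_cocone_triangle (biprod.lift (-γ) u)
  have h2 := rot_of_distTriang _ (binaryBiproductTriangle_distinguished d W)
  have hcomp : biprod.lift (-γ) u ≫ (biprod.snd : d ⊞ W ⟶ _) = u := by simp
  have oct := Triangulated.someOctahedron hcomp hP h2 (v₁₃ := v) (w₁₃ := w) hT
  refine ⟨P, hD.ext₁ _ oct.mem hC (hD.shift_mem _ _ hd), biprod.inr ≫ q, ?_⟩
  intro A x y hxy
  obtain ⟨z, hz⟩ := yo2 hP (biprod.desc y x) (by
    rw [biprod.lift_desc, hxy, Preadditive.neg_comp, neg_add_cancel])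
  refine ⟨z, ?_⟩
  rw [Category.assoc, ← hz]
  simp

/-- If an endomorphism `t` of `Z` factors through `D` and its cone is in `D`, then `Z ∈ D`. -/
lemma mem_of_fac_of_cone [IsTriangulated T] {D : Set T} (hD : IsThickSubcategory D)
    {Z C : T} (t : Z ⟶ Z) (g : Z ⟶ C) (h : C ⟶ Z⟦(1 : ℤ)⟧)
    (hT : Triangle.mk t g h ∈ distTriang T) (hC : C ∈ D) (ht : Fac D t) : Z ∈ D := by
  obtain ⟨d, hd, a, b, hab⟩ := ht
  obtain ⟨P, hP, j, hj⟩ := exists_hpushout hD hT hC hd a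
  obtain ⟨z, hz⟩ := hj Z (𝟙 Z) b (by simp [hab])
  exact hD.retract_mem Z P j z hz hP

lemma cone_comp_mem [IsTriangulated T] {D : Set T} (hD : IsThickSubcategory D)
    {X Y Z C₁ C₂ C : T} (f : X ⟶ Y) (f' : Y ⟶ Z)
    {g₁ : Y ⟶ C₁} {h₁ : C₁ ⟶ X⟦(1 : ℤ)⟧} (H₁ : Triangle.mk f g₁ h₁ ∈ distTriang T)
    {g₂ : Z ⟶ C₂} {h₂ : C₂ ⟶ Y⟦(1 : ℤ)⟧} (H₂ : Triangle.mk f' g₂ h₂ ∈ distTriang T)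
    {g : Z ⟶ C} {h : C ⟶ X⟦(1 : ℤ)⟧} (H : Triangle.mk (f ≫ f') g h ∈ distTriang T)
    (hC₁ : C₁ ∈ D) (hC₂ : C₂ ∈ D) : C ∈ D :=
  hD.ext₂ _ (Triangulated.someOctahedron rfl H₁ H₂ H).mem hC₁ hC₂

section Linear

variable {R : Type*} [CommRing R] [Linear R T] [∀ n : ℤ, (shiftFunctor T n).Linear R]

lemma Fac.smul {D : Set T} {X Y : T} {φ : X ⟶ Y} (h : Fac D φ) (r : R) :
    Fac D (r • φ) := by
  obtain ⟨d, hd, a, b, rfl⟩ := h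
  exact ⟨d, hd, a, r • b, by simp⟩

/-- Multiplication by `r` on `A` is negligible on maps from objects of `S`. -/
def IsNegl (S D : Set T) (r : R) (A : T) : Prop :=
  ∀ W ∈ S, ∀ φ : W ⟶ A, Fac D (r • φ)

lemma fac_of_ext [IsTriangulated T] {S D : Set T} (hS : IsThickSubcategory S)
    (hD : IsThickSubcategory D) (hDS : D ⊆ S) (T' : Triangle T) (hT : T' ∈ distTriang T)
    (a b : R) {W : T} (hW : W ∈ S) (φ : W ⟶ T'.obj₂) (hb : Fac D (b • (φ ≫ T'.mor₂)))
    (ha : IsNegl S D a T'.obj₁) : Fac D ((a * b) • φ) := by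
  obtain ⟨d, hd, α, β, hαβ⟩ := hb
  obtain ⟨W', u, w, hW'⟩ := distinguished_cocone_triangle₁ α
  have hW'S : W' ∈ S := hS.ext₁ _ hW' hW (hDS hd)
  have huα : u ≫ α = 0 := tri12 hW'
  obtain ⟨ψ, hψ⟩ := Triangle.coyoneda_exact₂ _ hT (u ≫ (b • φ)) (by
    rw [Category.assoc, Linear.smul_comp, ← hαβ, ← Category.assoc, huα, zero_comp])
  obtain ⟨d', hd', γ, δ, hγδ⟩ := ha W' hW'S ψ
  obtain ⟨P, hP, j, hj⟩ := exists_hpushout hD hW' hd hd' γ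
  obtain ⟨z, hz⟩ := hj _ ((a * b) • φ) (δ ≫ T'.mor₁) (by
    rw [← Category.assoc, hγδ, Linear.smul_comp, ← hψ, mul_smul, Linear.comp_smul])
  exact ⟨P, hP, j, z, hz⟩

lemma IsNegl.ext [IsTriangulated T] {S D : Set T} (hS : IsThickSubcategory S)
    (hD : IsThickSubcategory D) (hDS : D ⊆ S) (T' : Triangle T) (hT : T' ∈ distTriang T)
    (a b : R) (ha : IsNegl S D a T'.obj₁) (hb : IsNegl S D b T'.obj₃) : IsNegl S D (a * b) T'.obj₂ :=
  fun W hW φ => fac_of_ext hS hD hDS T' hT a b hW φ (hb W hW _) ha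

lemma IsNegl.iso {S D : Set T} {a : R} {A B : T} (e : A ≅ B) (h : IsNegl S D a A) : IsNegl S D a B := by
  intro W hW φ
  have := (h W hW (φ ≫ e.inv)).comp_right e.hom
  simpa using this

lemma Fac.map_shift {D : Set T} (hD : IsThickSubcategory D) {X Y : T} {φ : X ⟶ Y} (h : Fac D φ)
    (n : ℤ) : Fac D (φ⟦n⟧') := by
  obtain ⟨d, hd, a, b, rfl⟩ := h
  exact ⟨d⟦n⟧, hD.shift_mem _ _ hd, a⟦n⟧', b⟦n⟧', by simp⟩

lemma IsNegl.shift {S D : Set T} (hS : IsThickSubcategory S) (hD : IsThickSubcategory D)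
    {a : R} {A : T} (n : ℤ) (h : IsNegl S D a A) : IsNegl S D a (A⟦n⟧) := by
  intro W hW φ
  obtain ⟨ψ, hψ⟩ := (shiftFunctor T n).map_surjective ((shiftNegShift W n).hom ≫ φ)
  have h3 := ((h (W⟦-n⟧) (hS.shift_mem _ _ hW) ψ).map_shift hD n).comp_left
    (shiftNegShift W n).inv
  rwa [CategoryTheory.Functor.map_smul, Linear.comp_smul, hψ, Iso.inv_hom_id_assoc] at h3

/-- The annihilator of an object in a linear category. -/
def annIdeal (R : Type*) [CommRing R] [Linear R T] (Z : T) : Ideal R where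
  carrier := {r | r • 𝟙 Z = 0}
  add_mem' := by
    intro a b ha hb
    simp only [Set.mem_ofPred_eq] at *
    rw [add_smul, ha, hb, add_zero]
  zero_mem' := by simp
  smul_mem' := by
    intro c x hx
    simp only [Set.mem_ofPred_eq, smul_eq_mul] at *
    rw [mul_smul, hx, smul_zero]

lemma mem_annIdeal {Z : T} {r : R} : r ∈ annIdeal R Z ↔ r • 𝟙 Z = 0 := Iff.rfl

lemma smul_eq_zero_of_mem_annIdeal {Z W : T} {r : R} (h : r ∈ annIdeal R Z) (f : Z ⟶ W) :
    r • f = 0 := by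
  rw [← Category.id_comp f, ← Linear.smul_comp, mem_annIdeal.1 h, zero_comp]

lemma smul_eq_zero_of_mem_annIdeal' {Z W : T} {r : R} (h : r ∈ annIdeal R Z) (f : W ⟶ Z) :
    r • f = 0 := by
  rw [← Category.comp_id f, ← Linear.comp_smul, mem_annIdeal.1 h, comp_zero]

lemma annIdeal_ext (T' : Triangle T) (hT : T' ∈ distTriang T) (a b : R)
    (ha : a ∈ annIdeal R T'.obj₁) (hb : b ∈ annIdeal R T'.obj₃) :
    a * b ∈ annIdeal R T'.obj₂ := by
  obtain ⟨ψ, hψ⟩ := Triangle.coyoneda_exact₂ _ hT (b • 𝟙 T'.obj₂) (by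
    rw [Linear.smul_comp, Category.id_comp, smul_eq_zero_of_mem_annIdeal' hb])
  rw [mem_annIdeal, mul_smul, hψ, ← Linear.smul_comp, smul_eq_zero_of_mem_annIdeal' ha, zero_comp]

lemma isThick_nilpotent (r : R) :
    IsThickSubcategory {Z : T | r ∈ (annIdeal R Z).radical} where
  mem_of_iso := by
    rintro X Y e ⟨n, hn⟩
    refine ⟨n, ?_⟩
    rw [mem_annIdeal, ← e.inv_hom_id, ← Linear.smul_comp, smul_eq_zero_of_mem_annIdeal' hn,
      zero_comp]
  zero_mem := ⟨1, by rw [mem_annIdeal]; exact (isZero_zero T).eq_of_src _ _⟩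
  shift_mem := by
    rintro X k ⟨n, hn⟩
    refine ⟨n, ?_⟩
    rw [mem_annIdeal, ← (shiftFunctor T k).map_id, ← CategoryTheory.Functor.map_smul, mem_annIdeal.1 hn,
      CategoryTheory.Functor.map_zero]
  ext₂ := by
    rintro T' hT ⟨n, hn⟩ ⟨m, hm⟩
    exact ⟨n + m, by rw [pow_add]; exact annIdeal_ext T' hT _ _ hn hm⟩
  retract_mem := by
    rintro X Y i r' h ⟨n, hn⟩
    refine ⟨n, ?_⟩
    rw [mem_annIdeal, ← h, ← Linear.smul_comp, smul_eq_zero_of_mem_annIdeal' hn, zero_comp]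

lemma sq_mem_annIdeal_cone {Z C : T} (r : R) (g : Z ⟶ C) (h : C ⟶ Z⟦(1 : ℤ)⟧)
    (hT : Triangle.mk (r • 𝟙 Z) g h ∈ distTriang T) : r ^ 2 ∈ annIdeal R C := by
  have h1 : (r • 𝟙 Z) ≫ g = 0 := tri12 hT
  have h2 : h ≫ (r • 𝟙 Z)⟦(1 : ℤ)⟧' = 0 := tri31 hT
  obtain ⟨k, hk⟩ := yo3 hT (r • 𝟙 C) (by
    rw [Linear.comp_smul, Category.comp_id]
    rwa [Linear.smul_comp, Category.id_comp] at h1)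
  rw [mem_annIdeal, pow_two, mul_smul, hk, ← Linear.smul_comp]
  rw [CategoryTheory.Functor.map_smul, CategoryTheory.Functor.map_id, Linear.comp_smul,
    Category.comp_id] at h2
  rw [h2, zero_comp]

lemma cone_pow_mem [IsTriangulated T] {D : Set T} (hD : IsThickSubcategory D) {Z : T} (r : R)
    (h : ∀ C (g : Z ⟶ C) (h : C ⟶ Z⟦(1 : ℤ)⟧),
      Triangle.mk (r • 𝟙 Z) g h ∈ distTriang T → C ∈ D) (n : ℕ) :
    ∀ C (g : Z ⟶ C) (h : C ⟶ Z⟦(1 : ℤ)⟧),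
      Triangle.mk (r ^ n • 𝟙 Z) g h ∈ distTriang T → C ∈ D := by
  induction n with
  | zero =>
    intro C g h hT
    rw [pow_zero, one_smul] at hT
    have : IsZero C := Triangle.isZero₃_of_isIso₁ _ hT (inferInstanceAs (IsIso (𝟙 Z)))
    exact hD.mem_of_iso ((isZero_zero T).iso this) hD.zero_mem
  | succ n ih =>
    intro C g h' hT
    obtain ⟨C₁, g₁, h₁, H₁⟩ := distinguished_cocone_triangle (r ^ n • 𝟙 Z)
    obtain ⟨C₂, g₂, h₂, H₂⟩ := distinguished_cocone_triangle (r • 𝟙 Z)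
    have : r ^ (n + 1) • 𝟙 Z = (r ^ n • 𝟙 Z) ≫ (r • 𝟙 Z) := by
      rw [Linear.smul_comp, Category.id_comp, smul_smul, pow_succ]
    rw [this] at hT
    exact cone_comp_mem hD _ _ H₁ H₂ hT (ih _ _ _ H₁) (h _ _ _ H₂)

/-- The thick subcategory generated by an object. -/
def thickClosure (X : T) : Set T := {Z | ∀ D : Set T, IsThickSubcategory D → X ∈ D → Z ∈ D}

lemma isThick_thickClosure (X : T) : IsThickSubcategory (thickClosure X) where
  mem_of_iso e h D hD hX := hD.mem_of_iso e (h D hD hX)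
  zero_mem D hD _ := hD.zero_mem
  shift_mem Z n h D hD hX := hD.shift_mem Z n (h D hD hX)
  ext₂ T' hT h₁ h₃ D hD hX := hD.ext₂ T' hT (h₁ D hD hX) (h₃ D hD hX)
  retract_mem A B i r h hB D hD hX := hD.retract_mem A B i r h (hB D hD hX)

/-- The abstract core of the argument. -/
theorem core [IsTriangulated T] {S D : Set T} (hS : IsThickSubcategory S)
    (hD : IsThickSubcategory D) {X : T} (hX : X ∈ S)
    (H : ∀ p : Ideal R, p.IsPrime → (∃ s, s ∉ p ∧ s ∈ annIdeal R X) ∨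
      (∃ s, s ∉ p ∧ ∃ J : Ideal R, J.FG ∧ J ≤ p ∧
        ∀ Z ∈ S, J ≤ (annIdeal R Z).radical → ∃ N : ℕ, Fac D (s ^ N • 𝟙 Z))) : X ∈ D := by
  classical
  by_contra hXD
  let Good : Ideal R → Prop := fun J =>
    ∀ Z ∈ thickClosure X, J ≤ (annIdeal R Z).radical → Z ∈ D
  let Bad : Set (Ideal R) := {I | ∀ J : Ideal R, J.FG → J ≤ I → ¬ Good J}
  have hbot : (⊥ : Ideal R) ∈ Bad := by
    intro J _ hJ hG
    exact hXD (hG X (fun _ _ h => h) (hJ.trans bot_le))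
  obtain ⟨p, -, hp⟩ := zorn_le_nonempty₀ Bad (fun c hc hchain y hy => by
    refine ⟨sSup c, ?_, fun z hz => le_sSup hz⟩
    intro J hJ hle hG
    obtain ⟨I, hI, hJI⟩ : ∃ I ∈ c, J ≤ I := by
      have := (Submodule.fg_iff_compact (s := J)).1 hJ
      obtain ⟨x, hx, hx'⟩ := (CompleteLattice.isCompactElement_iff_le_of_directed_sSup_le _ J).1
        this c ⟨y, hy⟩ hchain.directedOn hle
      exact ⟨x, hx, hx'⟩
    exact hc hI J hJ hJI hG) ⊥ hbot
  have hpBad : p ∈ Bad := hp.prop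
  have key : ∀ s, s ∉ p → ∃ J : Ideal R, J.FG ∧ J ≤ p ∧
      ∀ Z ∈ thickClosure X, J ≤ (annIdeal R Z).radical → s ∈ (annIdeal R Z).radical → Z ∈ D := by
    intro s hs
    have hnot : p ⊔ Ideal.span {s} ∉ Bad := by
      intro hb
      exact hs (hp.le_of_ge hb le_sup_left
        (Ideal.mem_sup_right (Ideal.mem_span_singleton_self s)))
    simp only [Bad, Set.mem_ofPred_eq, not_forall, not_not] at hnot
    obtain ⟨J, hJ, hle, hG⟩ := hnot
    obtain ⟨t, rfl⟩ := hJ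
    have hmem : ∀ x ∈ t, ∃ y ∈ p, x ∈ Ideal.span {y} ⊔ Ideal.span {s} := by
      intro x hx
      obtain ⟨y, hy, z, hz, hyz⟩ := Submodule.mem_sup.1 (hle (Ideal.subset_span hx))
      exact ⟨y, hy, hyz ▸ Submodule.add_mem_sup (Ideal.mem_span_singleton_self y) hz⟩
    choose! y hy hxy using hmem
    refine ⟨Ideal.span (t.image y), ⟨_, rfl⟩, Ideal.span_le.2 ?_, ?_⟩
    · intro a ha
      simp only [Finset.coe_image, Set.mem_image, Finset.mem_coe] at ha
      obtain ⟨x, hx, rfl⟩ := ha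
      exact hy x hx
    · intro Z hZ h1 h2
      refine hG Z hZ (Ideal.span_le.2 fun x hx => ?_)
      refine (sup_le ?_ ?_ : Ideal.span {y x} ⊔ Ideal.span {s} ≤ (annIdeal R Z).radical) (hxy x hx)
      · rw [Ideal.span_singleton_le_iff_mem]
        exact h1 (Ideal.subset_span (Finset.mem_coe.2 (Finset.mem_image_of_mem y hx)))
      · rwa [Ideal.span_singleton_le_iff_mem]
  have hthick := isThick_thickClosure X
  have hconeThick : ∀ Z ∈ thickClosure X, ∀ (f : Z ⟶ Z) C (g : Z ⟶ C) (h : C ⟶ Z⟦(1 : ℤ)⟧),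
      Triangle.mk f g h ∈ distTriang T → C ∈ thickClosure X :=
    fun Z hZ f C g h hT => hthick.ext₃ _ hT hZ hZ
  have hconeRad : ∀ Z, ∀ (f : Z ⟶ Z) C (g : Z ⟶ C) (h : C ⟶ Z⟦(1 : ℤ)⟧),
      Triangle.mk f g h ∈ distTriang T → (annIdeal R Z).radical ≤ (annIdeal R C).radical :=
    fun Z f C g h hT r hr => (isThick_nilpotent r).ext₃ _ hT hr hr
  have hprime : p.IsPrime := by
    refine ⟨?_, ?_⟩
    · rintro rfl
      refine hpBad ⊤ ⟨{1}, by simp⟩ le_rfl ?_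
      intro Z _ hZ
      obtain ⟨n, hn⟩ := hZ (Submodule.mem_top (x := (1 : R)))
      rw [one_pow, mem_annIdeal, one_smul] at hn
      exact hD.mem_of_iso ((isZero_zero T).iso ((IsZero.iff_id_eq_zero Z).2 hn)) hD.zero_mem
    · intro a b hab
      by_contra hcon
      rw [not_or] at hcon
      obtain ⟨J₁, hJ₁, hle₁, hG₁⟩ := key a hcon.1
      obtain ⟨J₂, hJ₂, hle₂, hG₂⟩ := key b hcon.2
      refine hpBad (J₁ ⊔ J₂ ⊔ Ideal.span {a * b})
        (Submodule.FG.sup (Submodule.FG.sup hJ₁ hJ₂) ⟨{a * b}, by simp⟩)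
        (sup_le (sup_le hle₁ hle₂) (by rwa [Ideal.span_singleton_le_iff_mem])) ?_
      intro Z hZ hle
      have hab' : a * b ∈ (annIdeal R Z).radical :=
        hle (Ideal.mem_sup_right (Ideal.mem_span_singleton_self _))
      have l1 : J₁ ≤ (annIdeal R Z).radical := (le_sup_left.trans le_sup_left).trans hle
      have l2 : J₂ ≤ (annIdeal R Z).radical := (le_sup_right.trans le_sup_left).trans hle
      have ha : ∀ C (g : Z ⟶ C) (h : C ⟶ Z⟦(1 : ℤ)⟧),
          Triangle.mk (a • 𝟙 Z) g h ∈ distTriang T → C ∈ D := fun C g h hT =>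
        hG₁ C (hconeThick Z hZ _ C g h hT) (l1.trans (hconeRad _ _ _ _ _ hT))
          ⟨2, sq_mem_annIdeal_cone a g h hT⟩
      have hb : ∀ C (g : Z ⟶ C) (h : C ⟶ Z⟦(1 : ℤ)⟧),
          Triangle.mk (b • 𝟙 Z) g h ∈ distTriang T → C ∈ D := fun C g h hT =>
        hG₂ C (hconeThick Z hZ _ C g h hT) (l2.trans (hconeRad _ _ _ _ _ hT))
          ⟨2, sq_mem_annIdeal_cone b g h hT⟩
      have hab2 : ∀ C (g : Z ⟶ C) (h : C ⟶ Z⟦(1 : ℤ)⟧),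
          Triangle.mk ((a * b) • 𝟙 Z) g h ∈ distTriang T → C ∈ D := by
        intro C g h hT
        obtain ⟨C₁, g₁, h₁, H₁⟩ := distinguished_cocone_triangle (a • 𝟙 Z)
        obtain ⟨C₂, g₂, h₂, H₂⟩ := distinguished_cocone_triangle (b • 𝟙 Z)
        have : (a * b) • 𝟙 Z = (a • 𝟙 Z) ≫ (b • 𝟙 Z) := by
          rw [Linear.smul_comp, Category.id_comp, smul_smul]
        rw [this] at hT
        exact cone_comp_mem hD _ _ H₁ H₂ hT (ha _ _ _ H₁) (hb _ _ _ H₂)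
      obtain ⟨n, hn⟩ := hab'
      obtain ⟨C, g, h, hT⟩ := distinguished_cocone_triangle ((a * b) ^ n • 𝟙 Z)
      refine mem_of_fac_of_cone hD _ g h hT (cone_pow_mem hD _ hab2 n _ _ _ hT) ?_
      rw [mem_annIdeal.1 hn]
      exact Fac.zero hD _ _
  rcases H p hprime with ⟨s, hs, hsX⟩ | ⟨s, hs, J, hJ, hJp, hN⟩
  · obtain ⟨J, hJ, hJp, hG⟩ := key s hs
    refine hpBad J hJ hJp fun Z hZ hle => hG Z hZ hle ?_
    exact hZ _ (isThick_nilpotent s) ⟨1, by rwa [pow_one]⟩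
  · obtain ⟨J', hJ', hJp', hG⟩ := key s hs
    refine hpBad (J ⊔ J') (Submodule.FG.sup hJ hJ') (sup_le hJp hJp') fun Z hZ hle => ?_
    obtain ⟨N, hF⟩ := hN Z (hZ S hS hX) (le_sup_left.trans hle)
    obtain ⟨C, g, h, hT⟩ := distinguished_cocone_triangle (s ^ N • 𝟙 Z)
    refine mem_of_fac_of_cone hD _ g h hT (cone_pow_mem hD s ?_ N _ _ _ hT) hF
    intro C g h hT
    exact hG C (hconeThick Z hZ _ C g h hT)
      ((le_sup_right.trans hle).trans (hconeRad _ _ _ _ _ hT)) ⟨2, sq_mem_annIdeal_cone s g h hT⟩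

end Linear

end Abstract


/-! ## Part 2: retracts and finite free complexes -/

section Retracts

variable {T : Type*} [Category T] [HasZeroObject T] [Preadditive T]
    [HasShift T ℤ] [∀ n : ℤ, (shiftFunctor T n).Additive] [Pretriangulated T]

/-- The class of retracts of objects in a class. -/
def retractClosure (E : Set T) : Set T :=
  {X | ∃ P ∈ E, ∃ (i : X ⟶ P) (r : P ⟶ X), i ≫ r = 𝟙 X}

lemma tri_mor2 {X Y Z X' Y' Z' : T} {u : X ⟶ Y} {v : Y ⟶ Z} {w : Z ⟶ X⟦(1 : ℤ)⟧}
    {u' : X' ⟶ Y'} {v' : Y' ⟶ Z'} {w' : Z' ⟶ X'⟦(1 : ℤ)⟧}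
    (hT : Triangle.mk u v w ∈ distTriang T) (hT' : Triangle.mk u' v' w' ∈ distTriang T)
    (a : X ⟶ X') (c : Z ⟶ Z') (h : w ≫ a⟦(1 : ℤ)⟧' = c ≫ w') :
    ∃ b : Y ⟶ Y', u ≫ b = a ≫ u' ∧ v ≫ c = b ≫ v' :=
  complete_distinguished_triangle_morphism₂ _ _ hT hT' a c h

lemma retractClosure_ext {E : Set T}
    (hext : ∀ (T' : Triangle T), T' ∈ (distTriang T) → T'.obj₁ ∈ E → T'.obj₃ ∈ E → T'.obj₂ ∈ E)
    {X Y Z : T} {u' : X ⟶ Y} {v' : Y ⟶ Z} {w' : Z ⟶ X⟦(1 : ℤ)⟧}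
    (hT : Triangle.mk u' v' w' ∈ distTriang T) (hX : X ∈ retractClosure E)
    (hZ : Z ∈ retractClosure E) : Y ∈ retractClosure E := by
  obtain ⟨P₁, hP₁, i₁, r₁, h₁⟩ := hX
  obtain ⟨P₃, hP₃, i₃, r₃, h₃⟩ := hZ
  obtain ⟨P₂, u, v, hP⟩ := distinguished_cocone_triangle₂ (r₃ ≫ w' ≫ i₁⟦(1 : ℤ)⟧')
  obtain ⟨f, hf₁, hf₂⟩ := tri_mor2 hT hP i₁ i₃ (by rw [reassoc_of% h₃])
  obtain ⟨g, hg₁, hg₂⟩ := tri_mor2 hP hT r₁ r₃ (by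
    rw [Category.assoc, Category.assoc, ← CategoryTheory.Functor.map_comp, h₁,
      CategoryTheory.Functor.map_id, Category.comp_id])
  let φ : Triangle.mk u' v' w' ⟶ Triangle.mk u' v' w' :=
    { hom₁ := 𝟙 X
      hom₂ := f ≫ g
      hom₃ := 𝟙 Z
      comm₁ := show u' ≫ f ≫ g = 𝟙 X ≫ u' by
        rw [reassoc_of% hf₁, hg₁, reassoc_of% h₁, Category.id_comp]
      comm₂ := show v' ≫ 𝟙 Z = (f ≫ g) ≫ v' by
        rw [Category.assoc, ← hg₂, ← reassoc_of% hf₂, h₃]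
      comm₃ := show w' ≫ (𝟙 X)⟦(1 : ℤ)⟧' = 𝟙 Z ≫ w' by simp }
  have : IsIso φ.hom₂ := isIso₂_of_isIso₁₃ φ hT hT (inferInstanceAs (IsIso (𝟙 X)))
    (inferInstanceAs (IsIso (𝟙 Z)))
  have : IsIso (f ≫ g) := this
  exact ⟨P₂, hext _ hP hP₁ hP₃, f, g ≫ inv (f ≫ g), by
    rw [← Category.assoc, IsIso.hom_inv_id (f ≫ g)]⟩

lemma isThick_retractClosure {E : Set T} (hz : (0 : T) ∈ E)
    (hsh : ∀ X (n : ℤ), X ∈ E → X⟦n⟧ ∈ E)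
    (hext : ∀ (T' : Triangle T), T' ∈ (distTriang T) → T'.obj₁ ∈ E → T'.obj₃ ∈ E → T'.obj₂ ∈ E) :
    IsThickSubcategory (retractClosure E) where
  mem_of_iso := by
    rintro X Y e ⟨P, hP, i, r, h⟩
    exact ⟨P, hP, e.inv ≫ i, r ≫ e.hom, by simp [reassoc_of% h]⟩
  zero_mem := ⟨0, hz, 𝟙 _, 𝟙 _, by simp⟩
  shift_mem := by
    rintro X n ⟨P, hP, i, r, h⟩
    exact ⟨P⟦n⟧, hsh _ _ hP, i⟦n⟧', r⟦n⟧', by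
      rw [← CategoryTheory.Functor.map_comp, h, CategoryTheory.Functor.map_id]⟩
  ext₂ := by
    intro T' hT h₁ h₃
    exact retractClosure_ext hext (u' := T'.mor₁) (v' := T'.mor₂) (w' := T'.mor₃) hT h₁ h₃
  retract_mem := by
    rintro X Y i r h ⟨P, hP, i', r', h'⟩
    exact ⟨P, hP, i ≫ i', r' ≫ r, by simp [reassoc_of% h', h]⟩

/-- If `Y ∈ D` is a retract of `P`, then `Y` is a retract of the cone `Q` of `1 - e`, which lies
in `D`. -/
lemma cone_of_retract [IsTriangulated T] {D : Set T} (hD : IsThickSubcategory D) {Y P Q : T}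
    (hY : Y ∈ D) (i : Y ⟶ P) (r : P ⟶ Y) (hir : i ≫ r = 𝟙 Y) {g : P ⟶ Q} {h : Q ⟶ P⟦(1 : ℤ)⟧}
    (hQ : Triangle.mk (𝟙 P - r ≫ i) g h ∈ distTriang T) :
    Q ∈ D ∧ ∃ (a : Y ⟶ Q) (b : Q ⟶ Y), a ≫ b = 𝟙 Y := by
  constructor
  · obtain ⟨Y', c, δ, hc⟩ := distinguished_cocone_triangle i
    have hδ : δ = 0 := by
      have h1 : δ ≫ i⟦(1 : ℤ)⟧' = 0 := tri31 hc
      rw [← Category.comp_id δ, ← CategoryTheory.Functor.map_id, ← hir,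
        CategoryTheory.Functor.map_comp, reassoc_of% h1, zero_comp]
    obtain ⟨j, hj⟩ := yo2 hc (𝟙 P - r ≫ i) (by
      rw [Preadditive.comp_sub, reassoc_of% hir, Category.comp_id, sub_self])
    have hic : i ≫ c = 0 := tri12 hc
    have hjc : j ≫ c = 𝟙 Y' := by
      have : c ≫ (j ≫ c - 𝟙 Y') = 0 := by
        rw [Preadditive.comp_sub, ← reassoc_of% hj, Preadditive.sub_comp, Category.assoc, hic]
        simp
      obtain ⟨k, hk⟩ := yo3 hc _ this
      rw [hδ, zero_comp] at hk
      exact sub_eq_zero.1 hk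
    obtain ⟨C, k, l, hC⟩ := distinguished_cocone_triangle j
    have hl : l = 0 := by
      have h1 : l ≫ j⟦(1 : ℤ)⟧' = 0 := tri31 hC
      rw [← Category.comp_id l, ← CategoryTheory.Functor.map_id, ← hjc,
        CategoryTheory.Functor.map_comp, reassoc_of% h1, zero_comp]
    have hjk : j ≫ k = 0 := tri12 hC
    have hjr : j ≫ r = 0 := by
      have : c ≫ (j ≫ r) = 0 := by
        rw [← reassoc_of% hj, Preadditive.sub_comp, Category.assoc, hir]
        simp
      obtain ⟨k, hk⟩ := yo3 hc _ this
      rw [hδ, zero_comp] at hk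
      exact hk
    obtain ⟨r', hr'⟩ := yo2 hC r hjr
    have hrik : r' ≫ i ≫ k = 𝟙 C := by
      have : k ≫ (r' ≫ i ≫ k - 𝟙 C) = 0 := by
        have h1 : r ≫ i = 𝟙 P - c ≫ j := by rw [← hj]; abel
        rw [Preadditive.comp_sub, ← reassoc_of% hr', reassoc_of% h1, Preadditive.sub_comp,
          Category.assoc, hjk]
        simp
      obtain ⟨m, hm⟩ := yo3 hC _ this
      rw [hl, zero_comp] at hm
      exact sub_eq_zero.1 hm
    have hCD : C ∈ D := hD.retract_mem C Y r' (i ≫ k) hrik hY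
    rw [hj] at hQ
    exact cone_comp_mem hD c j (rot_of_distTriang _ hc) hC hQ (hD.shift_mem _ _ hY) hCD
  · obtain ⟨b, hb⟩ := yo2 hQ r (by
      rw [Preadditive.sub_comp, Category.assoc, hir]; simp)
    exact ⟨i ≫ g, b, by rw [Category.assoc, ← hb, hir]⟩

end Retracts

/-! ## Part 3: finite free complexes -/

section FiniteFree

variable {R : Type u} [CommRing R]

/-- Bounded complexes of finite free modules. -/
structure IsFF (P : CochainComplex (ModuleCat.{u} R) ℤ) : Prop where
  bdd : ∃ a b : ℤ, ∀ i, (i < a ∨ b < i) → IsZero (P.X i)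
  free : ∀ i, Module.Free R (P.X i)
  finite : ∀ i, Module.Finite R (P.X i)

lemma IsFF.isKProjective {P : CochainComplex (ModuleCat.{u} R) ℤ} (hP : IsFF P) :
    P.IsKProjective := by
  obtain ⟨a, b, hab⟩ := hP.bdd
  have : P.IsStrictlyLE b := by
    rw [CochainComplex.isStrictlyLE_iff]
    exact fun i hi => hab i (Or.inr hi)
  have := hP.free
  have (n : ℤ) : Projective (P.X n) := inferInstance
  exact CochainComplex.isKProjective_of_projective P b

lemma isFF_zero : IsFF (0 : CochainComplex (ModuleCat.{u} R) ℤ) := by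
  have h (i : ℤ) : IsZero ((0 : CochainComplex (ModuleCat.{u} R) ℤ).X i) :=
    (HomologicalComplex.eval _ _ i).map_isZero (isZero_zero _)
  have h' (i : ℤ) : Subsingleton ((0 : CochainComplex (ModuleCat.{u} R) ℤ).X i) :=
    ModuleCat.subsingleton_of_isZero (h i)
  exact ⟨⟨0, 0, fun i _ => h i⟩, fun i => inferInstance, fun i => inferInstance⟩

lemma IsFF.shift {P : CochainComplex (ModuleCat.{u} R) ℤ} (hP : IsFF P) (n : ℤ) :
    IsFF (P⟦n⟧) := by
  obtain ⟨a, b, hab⟩ := hP.bdd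
  refine ⟨⟨a - n, b - n, fun i hi => ?_⟩, fun i => hP.free _, fun i => hP.finite _⟩
  exact hab (i + n) (by omega)

lemma isFF_single (M : ModuleCat.{u} R) [Module.Free R M] [Module.Finite R M] (n : ℤ) :
    IsFF ((HomologicalComplex.single (ModuleCat.{u} R) (ComplexShape.up ℤ) n).obj M) := by
  have h (i : ℤ) (hi : i ≠ n) : IsZero (((HomologicalComplex.single (ModuleCat.{u} R)
    (ComplexShape.up ℤ) n).obj M).X i) := HomologicalComplex.isZero_single_obj_X _ _ _ _ hi
  refine ⟨⟨n, n, fun i hi => h i (by omega)⟩, fun i => ?_, fun i => ?_⟩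
  · by_cases hi : i = n
    · subst hi
      exact Module.Free.of_equiv
        (HomologicalComplex.singleObjXSelf (ComplexShape.up ℤ) i M).symm.toLinearEquiv
    · have := ModuleCat.subsingleton_of_isZero (h i hi)
      infer_instance
  · by_cases hi : i = n
    · subst hi
      exact Module.Finite.equiv
        (HomologicalComplex.singleObjXSelf (ComplexShape.up ℤ) i M).symm.toLinearEquiv
    · have := ModuleCat.subsingleton_of_isZero (h i hi)
      infer_instance

lemma IsFF.mappingCone {P K : CochainComplex (ModuleCat.{u} R) ℤ} (hP : IsFF P) (hK : IsFF K)
    (φ : P ⟶ K) : IsFF (CochainComplex.mappingCone φ) := by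
  obtain ⟨a, b, hab⟩ := hP.bdd
  obtain ⟨a', b', hab'⟩ := hK.bdd
  have e (i : ℤ) : (CochainComplex.mappingCone φ).X i ≃ₗ[R] (P.X (i + 1) × K.X i) :=
    (HomologicalComplex.homotopyCofiber.XIsoBiprod φ i (i + 1) rfl ≪≫
      ModuleCat.biprodIsoProd _ _).toLinearEquiv
  have := hP.free
  have := hP.finite
  have := hK.free
  have := hK.finite
  refine ⟨⟨min (a - 1) a', max b b', fun i hi => ?_⟩, fun i => Module.Free.of_equiv (e i).symm,
    fun i => Module.Finite.equiv (e i).symm⟩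
  rw [CochainComplex.mappingCone.isZero_X_iff]
  exact ⟨hab _ (by omega), hab' _ (by omega)⟩

variable [HasDerivedCategory.{w} (ModuleCat.{u} R)]

lemma exists_lift_of_isKProjective {P K : CochainComplex (ModuleCat.{u} R) ℤ}
    (hP : P.IsKProjective) (f : DerivedCategory.Q.obj P ⟶ DerivedCategory.Q.obj K) :
    ∃ φ : P ⟶ K, DerivedCategory.Q.map φ = f := by
  obtain ⟨g, hg⟩ := (CochainComplex.IsKProjective.Qh_map_bijective P
    ((HomotopyCategory.quotient _ _).obj K)).surjective
    ((DerivedCategory.quotientCompQhIso _).hom.app P ≫ f ≫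
      (DerivedCategory.quotientCompQhIso _).inv.app K)
  obtain ⟨φ, rfl⟩ := (HomotopyCategory.quotient _ _).map_surjective g
  refine ⟨φ, ?_⟩
  rw [← cancel_epi ((DerivedCategory.quotientCompQhIso _).hom.app P),
    ← DerivedCategory.quotientCompQhIso_hom_naturality, hg]
  simp

variable (R) in
/-- Objects of the derived category represented by finite free complexes. -/
def ffSet : Set (DerivedCategory (ModuleCat.{u} R)) :=
  {X | ∃ P : CochainComplex (ModuleCat.{u} R) ℤ, IsFF P ∧ Nonempty (DerivedCategory.Q.obj P ≅ X)}

lemma ffSet_cone {X Y Z : DerivedCategory (ModuleCat.{u} R)} {u : X ⟶ Y} {v : Y ⟶ Z}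
    {w : Z ⟶ X⟦(1 : ℤ)⟧} (hT : Triangle.mk u v w ∈ distTriang _) (hX : X ∈ ffSet R)
    (hY : Y ∈ ffSet R) : Z ∈ ffSet R := by
  obtain ⟨P, hP, ⟨eP⟩⟩ := hX
  obtain ⟨K, hK, ⟨eK⟩⟩ := hY
  obtain ⟨φ, hφ⟩ := exists_lift_of_isKProjective hP.isKProjective (eP.hom ≫ u ≫ eK.inv)
  refine ⟨_, hP.mappingCone hK φ, ⟨?_⟩⟩
  refine Triangle.π₃.mapIso (isoTriangleOfIso₁₂ _ _
    (DerivedCategory.mappingCone_triangle_distinguished φ) hT eP eK ?_)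
  show DerivedCategory.Q.map φ ≫ eK.hom = eP.hom ≫ u
  rw [hφ]
  simp

lemma ffSet_iso {X Y : DerivedCategory (ModuleCat.{u} R)} (e : X ≅ Y) (hX : X ∈ ffSet R) :
    Y ∈ ffSet R := by
  obtain ⟨P, hP, ⟨eP⟩⟩ := hX
  exact ⟨P, hP, ⟨eP ≪≫ e⟩⟩

lemma ffSet_shift {X : DerivedCategory (ModuleCat.{u} R)} (n : ℤ) (hX : X ∈ ffSet R) :
    X⟦n⟧ ∈ ffSet R := by
  obtain ⟨P, hP, ⟨eP⟩⟩ := hX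
  exact ⟨P⟦n⟧, hP.shift n,
    ⟨(DerivedCategory.Q.commShiftIso n).app P ≪≫ (shiftFunctor _ n).mapIso eP⟩⟩

lemma isThick_retract_ff : IsThickSubcategory (retractClosure (ffSet R)) := by
  refine isThick_retractClosure ?_ (fun X n => ffSet_shift n) ?_
  · exact ⟨0, isFF_zero, ⟨(DerivedCategory.Q.map_isZero (isZero_zero _)).iso (isZero_zero _)⟩⟩
  · intro T' hT h₁ h₃
    have h := ffSet_cone (rot_of_distTriang _ (rot_of_distTriang _ hT)) h₃ (ffSet_shift 1 h₁)
    exact ffSet_iso (shiftShiftNeg T'.obj₂ 1) (ffSet_shift (-1) h)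

lemma small_retract_ff {X : DerivedCategory (ModuleCat.{u} R)} (hX : IsSmallObject X) :
    X ∈ retractClosure (ffSet R) :=
  hX _ isThick_retract_ff ⟨_, ⟨_, isFF_single (ModuleCat.of R R) 0, ⟨Iso.refl _⟩⟩, 𝟙 _, 𝟙 _,
    Category.comp_id _⟩

/-- Every object of a thick subcategory of small objects is a retract of a finite free complex
lying in the subcategory. -/
lemma exists_ff_retract {D : Set (DerivedCategory (ModuleCat.{u} R))} (hD : IsThickSubcategory D)
    {Y : DerivedCategory (ModuleCat.{u} R)} (hY : Y ∈ D) (hYs : IsSmallObject Y) :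
    ∃ P : CochainComplex (ModuleCat.{u} R) ℤ, IsFF P ∧ DerivedCategory.Q.obj P ∈ D ∧
      ∃ (a : Y ⟶ DerivedCategory.Q.obj P) (b : DerivedCategory.Q.obj P ⟶ Y), a ≫ b = 𝟙 Y := by
  obtain ⟨P, hP, i, r, hir⟩ := small_retract_ff hYs
  obtain ⟨Q, g, h, hQ⟩ := distinguished_cocone_triangle (𝟙 P - r ≫ i)
  obtain ⟨h1, a, b, hab⟩ := cone_of_retract hD hY i r hir hQ
  obtain ⟨K, hK, ⟨e⟩⟩ := ffSet_cone hQ hP hP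
  exact ⟨K, hK, hD.mem_of_iso e.symm h1, a ≫ e.inv, e.hom ≫ b, by simp [hab]⟩

end FiniteFree

/-! ## Part 4: a linear algebra dichotomy -/

section Dichotomy

lemma field_dichotomy {K U V W : Type*} [Field K] [AddCommGroup U] [Module K U]
    [AddCommGroup V] [Module K V] [AddCommGroup W] [Module K W] (A : U →ₗ[K] V) (B : V →ₗ[K] W) :
    (∃ (C : V →ₗ[K] U) (E : W →ₗ[K] V), A ∘ₗ C + E ∘ₗ B = LinearMap.id) ∨
    (∃ (v : V) (f : V →ₗ[K] K), B v = 0 ∧ f ∘ₗ A = 0 ∧ f v ≠ 0) := by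
  by_cases h : LinearMap.ker B ≤ LinearMap.range A
  · left
    obtain ⟨s, hs⟩ := B.rangeRestrict.exists_rightInverse_of_surjective B.range_rangeRestrict
    obtain ⟨g, hg⟩ := s.exists_extend
    obtain ⟨t, ht⟩ := A.rangeRestrict.exists_rightInverse_of_surjective A.range_rangeRestrict
    have hBg (v : V) : B (g (B v)) = B v := by
      have h1 : g (B v) = s (B.rangeRestrict v) := by rw [← hg]; rfl
      have h2 := congrArg Subtype.val (LinearMap.congr_fun hs (B.rangeRestrict v))
      rw [h1]; exact h2
    have hmem (v : V) : (LinearMap.id (R := K) (M := V) - g ∘ₗ B) v ∈ LinearMap.range A := by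
      apply h
      rw [LinearMap.mem_ker]
      simp [hBg]
    refine ⟨t ∘ₗ (LinearMap.id (R := K) (M := V) - g ∘ₗ B).codRestrict _ hmem, g, ?_⟩
    ext v
    have h2 := congrArg Subtype.val (LinearMap.congr_fun ht
      ((LinearMap.id (R := K) (M := V) - g ∘ₗ B).codRestrict _ hmem v))
    have h3 : A (t ((LinearMap.id (R := K) (M := V) - g ∘ₗ B).codRestrict _ hmem v)) = v - g (B v) := h2
    simp only [LinearMap.add_apply, LinearMap.comp_apply, LinearMap.id_apply]
    rw [h3]
    abel
  · right
    obtain ⟨v, hv, hv'⟩ := SetLike.not_le_iff_exists.1 h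
    obtain ⟨f, hf, hf'⟩ := Submodule.exists_le_ker_of_notMem hv'
    exact ⟨v, f, hv, by ext x; exact hf' ⟨x, rfl⟩, hf⟩

variable {R : Type*} [CommRing R]

lemma clear_denom (p : Ideal R) [p.IsPrime] {ι : Type*} [Finite ι]
    (x : ι → FractionRing (R ⧸ p)) :
    ∃ t, t ∉ p ∧ ∃ y : ι → R, ∀ i, algebraMap R (FractionRing (R ⧸ p)) (y i) =
      algebraMap R (FractionRing (R ⧸ p)) t * x i := by
  obtain ⟨b, hb⟩ := IsLocalization.exist_integer_multiples_of_finite (nonZeroDivisors (R ⧸ p)) x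
  choose z hz using hb
  obtain ⟨t, ht⟩ := Ideal.Quotient.mk_surjective (b : R ⧸ p)
  choose y hy using fun i => Ideal.Quotient.mk_surjective (z i)
  refine ⟨t, ?_, y, fun i => ?_⟩
  · intro h
    rw [← Ideal.Quotient.eq_zero_iff_mem, ht] at h
    exact nonZeroDivisors.ne_zero b.2 h
  · rw [IsScalarTower.algebraMap_apply R (R ⧸ p) (FractionRing (R ⧸ p)) (y i),
      IsScalarTower.algebraMap_apply R (R ⧸ p) (FractionRing (R ⧸ p)) t]
    rw [Ideal.Quotient.algebraMap_eq, hy, ht, hz, Algebra.smul_def]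

lemma algebraMap_frac_eq_zero (p : Ideal R) [p.IsPrime] (r : R) :
    algebraMap R (FractionRing (R ⧸ p)) r = 0 ↔ r ∈ p := by
  rw [IsScalarTower.algebraMap_apply R (R ⧸ p), Ideal.Quotient.algebraMap_eq,
    FaithfulSMul.algebraMap_eq_zero_iff, Ideal.Quotient.eq_zero_iff_mem]

open Matrix in
lemma matrix_dichotomy (p : Ideal R) [p.IsPrime] {l n k : Type*} [Fintype l] [Fintype n]
    [Fintype k] [DecidableEq l] [DecidableEq n] [DecidableEq k]
    (A : Matrix n l R) (B : Matrix k n R) (hBA : B * A = 0) :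
    (∃ t, t ∉ p ∧ ∀ z : n → R, B *ᵥ z = 0 → ∃ y : l → R, t • z = A *ᵥ y) ∨
    (∃ (m w : n → R) (J : Ideal R), J.FG ∧ J ≤ p ∧ w ⬝ᵥ m ∉ p ∧ (∀ i, (B *ᵥ m) i ∈ J) ∧
      ∀ j, (w ᵥ* A) j ∈ J) := by
  set f := algebraMap R (FractionRing (R ⧸ p)) with hf
  rcases field_dichotomy (Matrix.toLin' (A.map f)) (Matrix.toLin' (B.map f)) with
    ⟨C, E, h⟩ | ⟨v, φ, h1, h2, h3⟩
  · left
    have h' : A.map f * LinearMap.toMatrix' C + LinearMap.toMatrix' E * B.map f = 1 := by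
      apply Matrix.toLin'.injective
      rw [map_add, Matrix.toLin'_mul, Matrix.toLin'_mul, Matrix.toLin'_toMatrix',
        Matrix.toLin'_toMatrix', Matrix.toLin'_one, h]
    obtain ⟨t, ht, C', hC'⟩ := clear_denom p (fun ij : l × n => LinearMap.toMatrix' C ij.1 ij.2)
    obtain ⟨t', ht', E', hE'⟩ := clear_denom p (fun ij : n × k => LinearMap.toMatrix' E ij.1 ij.2)
    let C₀ : Matrix l n R := Matrix.of fun i j => C' (i, j)
    let E₀ : Matrix n k R := Matrix.of fun i j => E' (i, j)
    have hC₀ : C₀.map f = f t • LinearMap.toMatrix' C := by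
      ext i j
      exact hC' (i, j)
    have hE₀ : E₀.map f = f t' • LinearMap.toMatrix' E := by
      ext i j
      exact hE' (i, j)
    let φ : Matrix n n R := t' • (A * C₀) + t • (E₀ * B)
    have hφ : φ.map f = f (t * t') • (1 : Matrix n n _) := by
      have : φ.map f = f t' • (A.map f * C₀.map f) + f t • (E₀.map f * B.map f) := by
        rw [← Matrix.map_mul, ← Matrix.map_mul]
        ext i j
        simp only [φ, Matrix.map_apply, Matrix.add_apply, Matrix.smul_apply, smul_eq_mul, map_add,
          map_mul]
      rw [this, hC₀, hE₀, Matrix.mul_smul, Matrix.smul_mul, smul_smul, smul_smul, mul_comm (f t'),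
        ← smul_add, h', map_mul]
    have hdet : φ.det ∉ p := by
      intro hd
      rw [← algebraMap_frac_eq_zero, ← hf, RingHom.map_det, RingHom.mapMatrix_apply, hφ,
        Matrix.det_smul, Matrix.det_one, mul_one] at hd
      have := eq_zero_of_pow_eq_zero hd
      rw [hf, algebraMap_frac_eq_zero] at this
      exact (Ideal.IsPrime.mem_or_mem inferInstance this).elim ht ht'
    have hcoef : φ.charpoly.coeff 0 ∉ p := by
      intro hd
      apply hdet
      rw [Matrix.det_eq_sign_charpoly_coeff]
      exact Ideal.mul_mem_left _ _ hd
    refine ⟨φ.charpoly.coeff 0, hcoef, fun z hz => ?_⟩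
    let I : Submodule R (n → R) := LinearMap.range A.mulVecLin
    have hstab : ∀ x ∈ I, φ *ᵥ x ∈ I := by
      rintro _ ⟨y, rfl⟩
      refine ⟨t' • (C₀ *ᵥ (A *ᵥ y)), ?_⟩
      have hb : B *ᵥ (A *ᵥ y) = 0 := by rw [Matrix.mulVec_mulVec, hBA, Matrix.zero_mulVec]
      simp only [Matrix.mulVecLin_apply, φ, Matrix.add_mulVec, Matrix.smul_mulVec,
        ← Matrix.mulVec_mulVec, hb, Matrix.mulVec_zero, smul_zero, add_zero, Matrix.mulVec_smul]
    have hstab' (q : Polynomial R) : ∀ x ∈ I, (Polynomial.aeval φ q) *ᵥ x ∈ I := by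
      induction q using Polynomial.induction_on' with
      | add a b ha hb =>
        intro x hx
        rw [map_add, Matrix.add_mulVec]
        exact I.add_mem (ha x hx) (hb x hx)
      | monomial d a =>
        induction d with
        | zero =>
          intro x hx
          rw [Polynomial.aeval_monomial, pow_zero, mul_one, Algebra.algebraMap_eq_smul_one,
            Matrix.smul_mulVec, Matrix.one_mulVec]
          exact I.smul_mem _ hx
        | succ d ih =>
          intro x hx
          rw [Polynomial.aeval_monomial, pow_succ, ← mul_assoc, ← Polynomial.aeval_monomial,
            ← Matrix.mulVec_mulVec]
          exact ih _ (hstab x hx)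
    have hz' : φ *ᵥ z ∈ I := by
      refine ⟨t' • (C₀ *ᵥ z), ?_⟩
      simp only [Matrix.mulVecLin_apply, φ, Matrix.add_mulVec, Matrix.smul_mulVec,
        ← Matrix.mulVec_mulVec, hz, Matrix.mulVec_zero, smul_zero, add_zero, Matrix.mulVec_smul]
    have hch := Matrix.aeval_self_charpoly φ
    rw [← Polynomial.divX_mul_X_add φ.charpoly, map_add, map_mul, Polynomial.aeval_X,
      Polynomial.aeval_C] at hch
    have h4 := congrArg (fun M => M *ᵥ z) hch
    simp only [Matrix.add_mulVec, Matrix.zero_mulVec, ← Matrix.mulVec_mulVec,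
      Algebra.algebraMap_eq_smul_one, Matrix.smul_mulVec, Matrix.one_mulVec] at h4
    have h5 := I.neg_mem (hstab' φ.charpoly.divX _ hz')
    rw [neg_eq_of_add_eq_zero_right h4] at h5
    obtain ⟨y, hy⟩ := h5
    exact ⟨y, hy.symm⟩
  · right
    obtain ⟨t, ht, m, hm⟩ := clear_denom p v
    obtain ⟨t', ht', w, hw⟩ := clear_denom p (fun i => φ (Pi.single i 1))
    have hφ (x : n → FractionRing (R ⧸ p)) : φ x = (fun i => φ (Pi.single i 1)) ⬝ᵥ x := by
      rw [LinearMap.pi_apply_eq_sum_univ φ x]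
      simp only [dotProduct, smul_eq_mul]
      exact Finset.sum_congr rfl fun i _ => by
        rw [mul_comm]
        congr 2
        ext j
        simp [Pi.single_apply, eq_comm]
    have hm' : (f ∘ m) = f t • v := funext hm
    have hw' : (f ∘ w) = f t' • (fun i => φ (Pi.single i 1)) := funext hw
    let a : k → R := B *ᵥ m
    let b : l → R := w ᵥ* A
    have ha (i : k) : a i ∈ p := by
      rw [← algebraMap_frac_eq_zero, ← hf]
      show f ((B *ᵥ m) i) = 0
      rw [RingHom.map_mulVec, hm', Matrix.mulVec_smul]
      rw [Matrix.toLin'_apply] at h1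
      rw [h1]; simp
    have hb (i : l) : b i ∈ p := by
      rw [← algebraMap_frac_eq_zero, ← hf]
      show f ((w ᵥ* A) i) = 0
      rw [RingHom.map_vecMul, hw', Matrix.smul_vecMul]
      have h4 := LinearMap.congr_fun h2 (Pi.single i 1)
      rw [LinearMap.comp_apply, hφ, Matrix.toLin'_apply, Matrix.dotProduct_mulVec] at h4
      simp at h4
      simp [h4]
    refine ⟨m, w, Ideal.span (Set.range a) ⊔ Ideal.span (Set.range b), ?_, ?_, ?_, ?_, ?_⟩
    · exact Submodule.FG.sup (Submodule.fg_span (Set.finite_range a))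
        (Submodule.fg_span (Set.finite_range b))
    · refine sup_le (Ideal.span_le.2 ?_) (Ideal.span_le.2 ?_)
      · rintro _ ⟨i, rfl⟩
        exact ha i
      · rintro _ ⟨i, rfl⟩
        exact hb i
    · intro hd
      rw [← algebraMap_frac_eq_zero, ← hf, RingHom.map_dotProduct, hm', hw', smul_dotProduct,
        dotProduct_smul, ← hφ, smul_eq_mul, smul_eq_mul, mul_eq_zero, mul_eq_zero, hf,
        algebraMap_frac_eq_zero, algebraMap_frac_eq_zero] at hd
      tauto
    · exact fun i => Ideal.mem_sup_left (Ideal.subset_span ⟨i, rfl⟩)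
    · exact fun i => Ideal.mem_sup_right (Ideal.subset_span ⟨i, rfl⟩)

lemma free_dichotomy (p : Ideal R) [p.IsPrime] {L M N : Type*} [AddCommGroup L] [Module R L]
    [AddCommGroup M] [Module R M] [AddCommGroup N] [Module R N]
    [Module.Free R L] [Module.Free R M] [Module.Free R N]
    [Module.Finite R L] [Module.Finite R M] [Module.Finite R N]
    (A : L →ₗ[R] M) (B : M →ₗ[R] N) (hBA : B ∘ₗ A = 0) :
    (∃ t, t ∉ p ∧ ∀ z, B z = 0 → ∃ y, t • z = A y) ∨
    (∃ (m : M) (φ : M →ₗ[R] R) (J : Ideal R), J.FG ∧ J ≤ p ∧ φ m ∉ p ∧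
      B m ∈ J • (⊤ : Submodule R N) ∧ ∀ y, φ (A y) ∈ J) := by
  classical
  let bL := Module.Free.chooseBasis R L
  let bM := Module.Free.chooseBasis R M
  let bN := Module.Free.chooseBasis R N
  rcases matrix_dichotomy p (LinearMap.toMatrix bL bM A) (LinearMap.toMatrix bM bN B) (by
      rw [← LinearMap.toMatrix_comp, hBA, map_zero]) with ⟨t, ht, h⟩ | ⟨m, w, J, hJ, hJp, h1, h2, h3⟩
  · left
    refine ⟨t, ht, fun z hz => ?_⟩
    obtain ⟨y, hy⟩ := h (bM.repr z) (by rw [LinearMap.toMatrix_mulVec_repr, hz]; simp)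
    refine ⟨bL.equivFun.symm y, ?_⟩
    apply bM.equivFun.injective
    have h4 := LinearMap.toMatrix_mulVec_repr bL bM A (bL.equivFun.symm y)
    have h5 : (bL.repr (bL.equivFun.symm y) : _ → R) = y := bL.equivFun.apply_symm_apply y
    rw [h5, ← hy] at h4
    rw [map_smul]
    exact h4
  · right
    let φ : M →ₗ[R] R := bM.constr R w
    have hφ (x : M) : φ x = dotProduct w (bM.repr x) := by
      simp only [φ, Module.Basis.constr_apply_fintype, dotProduct, smul_eq_mul]
      exact Finset.sum_congr rfl fun i _ => mul_comm _ _
    have h5 : (bM.repr (bM.equivFun.symm m) : _ → R) = m := bM.equivFun.apply_symm_apply m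
    refine ⟨bM.equivFun.symm m, φ, J, hJ, hJp, ?_, ?_, ?_⟩
    · rwa [hφ, h5]
    · rw [← bN.sum_repr (B (bM.equivFun.symm m))]
      refine Submodule.sum_mem _ fun i _ => Submodule.smul_mem_smul ?_ trivial
      have h4 := LinearMap.toMatrix_mulVec_repr bM bN B (bM.equivFun.symm m)
      rw [h5] at h4
      rw [← h4]
      exact h2 i
    · intro y
      rw [hφ, ← LinearMap.toMatrix_mulVec_repr bL bM A y, Matrix.dotProduct_mulVec]
      exact Ideal.sum_mem _ fun i _ => Ideal.mul_mem_right _ _ (h3 i)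

end Dichotomy

/-! ## Part 5: locally zero modules -/

section LocallyZero

variable {R : Type u} [CommRing R]

/-- Modules which are zero locally at `p`. -/
def LZ (p : Ideal R) : Set (ModuleCat.{u} R) := {M | ∀ x : M, ∃ s, s ∉ p ∧ s • x = 0}

lemma LZ.of_injective {p : Ideal R} {M N : ModuleCat.{u} R} (f : M →ₗ[R] N)
    (hf : Function.Injective f) (hN : N ∈ LZ p) : M ∈ LZ p := by
  intro x
  obtain ⟨s, hs, h⟩ := hN (f x)
  exact ⟨s, hs, hf (by rw [map_smul, h, map_zero])⟩

lemma LZ.of_surjective {p : Ideal R} {M N : ModuleCat.{u} R} (f : M →ₗ[R] N)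
    (hf : Function.Surjective f) (hN : M ∈ LZ p) : N ∈ LZ p := by
  intro y
  obtain ⟨x, rfl⟩ := hf y
  obtain ⟨s, hs, h⟩ := hN x
  exact ⟨s, hs, by rw [← map_smul, h, map_zero]⟩

lemma isWide_LZ (p : Ideal R) [p.IsPrime] : IsWideSubcategory (LZ p) where
  mem_of_iso e h := LZ.of_injective e.symm.toLinearEquiv.toLinearMap
    e.symm.toLinearEquiv.injective h
  kernel_mem f hX _ := LZ.of_injective (kernel.ι f).hom
    ((ModuleCat.mono_iff_injective _).1 inferInstance) hX
  cokernel_mem f _ hY := LZ.of_surjective (cokernel.π f).hom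
    ((ModuleCat.epi_iff_surjective _).1 inferInstance) hY
  extension_mem S hS h₁ h₃ := by
    intro x
    obtain ⟨s, hs, h⟩ := h₃ (S.g x)
    rw [← map_smul] at h
    obtain ⟨y, hy⟩ := (ShortComplex.moduleCat_exact_iff S).1 hS.exact _ h
    obtain ⟨t, ht, h'⟩ := h₁ y
    refine ⟨t * s, fun hm => (Ideal.IsPrime.mem_or_mem inferInstance hm).elim ht hs, ?_⟩
    rw [mul_smul, ← hy, ← map_smul, h', map_zero]

lemma homology_LZ {p : Ideal R} (S : ShortComplex (ModuleCat.{u} R))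
    (h : ∀ z : S.X₂, S.g z = 0 → ∃ s, s ∉ p ∧ ∃ y, s • z = S.f y) : S.homology ∈ LZ p := by
  refine LZ.of_injective S.moduleCatHomologyIso.toLinearEquiv.toLinearMap
    S.moduleCatHomologyIso.toLinearEquiv.injective ?_
  intro x
  obtain ⟨⟨z, hz⟩, rfl⟩ := Submodule.Quotient.mk_surjective _ x
  obtain ⟨s, hs, y, hy⟩ := h z hz
  refine ⟨s, hs, ?_⟩
  refine (Submodule.Quotient.mk_eq_zero _).2 ?_
  exact ⟨y, Subtype.ext hy.symm⟩

lemma of_homology_LZ {p : Ideal R} (S : ShortComplex (ModuleCat.{u} R))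
    (h : S.homology ∈ LZ p) : ∀ z : S.X₂, S.g z = 0 → ∃ s, s ∉ p ∧ ∃ y, s • z = S.f y := by
  intro z hz
  have h' : S.moduleCatLeftHomologyData.H ∈ LZ p :=
    LZ.of_injective S.moduleCatHomologyIso.symm.toLinearEquiv.toLinearMap
      S.moduleCatHomologyIso.symm.toLinearEquiv.injective h
  obtain ⟨s, hs, hx⟩ := h' (Submodule.Quotient.mk (⟨z, hz⟩ : LinearMap.ker S.g.hom))
  refine ⟨s, hs, ?_⟩
  obtain ⟨y, hy⟩ := (Submodule.Quotient.mk_eq_zero _).1 hx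
  exact ⟨y, (congrArg Subtype.val hy).symm⟩

lemma homology_iso_sc' (K : CochainComplex (ModuleCat.{u} R) ℤ) (i j k : ℤ) (hij : i + 1 = j)
    (hjk : j + 1 = k) : Nonempty (K.homology j ≅ (K.sc' i j k).homology) :=
  ⟨ShortComplex.homologyMapIso (K.isoSc' i j k (by simp; omega) (by simp; omega))⟩

variable [HasDerivedCategory.{w} (ModuleCat.{u} R)]

lemma homology_mem_LZ_iff (p : Ideal R) [p.IsPrime] (K : CochainComplex (ModuleCat.{u} R) ℤ)
    (i j k : ℤ) (hij : i + 1 = j) (hjk : j + 1 = k) :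
    (DerivedCategory.homologyFunctor _ j).obj (DerivedCategory.Q.obj K) ∈ LZ p ↔
      ∀ z : K.X j, K.d j k z = 0 → ∃ s, s ∉ p ∧ ∃ y, s • z = K.d i j y := by
  obtain ⟨e⟩ := homology_iso_sc' K i j k hij hjk
  let e' : (DerivedCategory.homologyFunctor _ j).obj (DerivedCategory.Q.obj K) ≅
    (K.sc' i j k).homology := (DerivedCategory.homologyFunctorFactors _ j).app K ≪≫ e
  constructor
  · intro h
    exact of_homology_LZ (K.sc' i j k) ((isWide_LZ p).mem_of_iso e' h)
  · intro h
    exact (isWide_LZ p).mem_of_iso e'.symm (homology_LZ (K.sc' i j k) h)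

lemma Q_map_eq_zero_of_single {M : ModuleCat.{u} R} {K : CochainComplex (ModuleCat.{u} R) ℤ}
    (f : (CochainComplex.singleFunctor (ModuleCat.{u} R) 0).obj M ⟶ K) (g : M ⟶ K.X (-1))
    (h : (HomologicalComplex.singleObjXSelf (ComplexShape.up ℤ) 0 M).inv ≫ f.f 0 =
      g ≫ K.d (-1) 0) :
    DerivedCategory.Q.map f = 0 := by
  rw [← DerivedCategory.Q.map_zero]
  refine DerivedCategory.Q_map_eq_of_homotopy _
    ((CochainComplex.HomComplex.Cochain.equivHomotopy f 0).symm
    ⟨CochainComplex.HomComplex.Cochain.fromSingleMk g (by omega), ?_⟩)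
  rw [CochainComplex.HomComplex.Cochain.δ_fromSingleMk g _ 0 0 (by omega),
    CochainComplex.HomComplex.Cochain.ofHom_zero, add_zero]
  apply (CochainComplex.HomComplex.Cochain.fromSingleEquiv (zero_add (0:ℤ))).injective
  rw [CochainComplex.HomComplex.Cochain.fromSingleEquiv_fromSingleMk, ← h]
  simp [CochainComplex.HomComplex.Cochain.fromSingleEquiv]

variable (R) in
/-- The ring in degree zero. -/
noncomputable abbrev unitObj : DerivedCategory (ModuleCat.{u} R) :=
  (DerivedCategory.singleFunctor (ModuleCat.{u} R) 0).obj (ModuleCat.of R R)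

lemma exists_smul_eq_zero_unit {p : Ideal R} [p.IsPrime] {X : DerivedCategory (ModuleCat.{u} R)}
    (hX : (DerivedCategory.homologyFunctor _ 0).obj X ∈ LZ p) (φ : unitObj R ⟶ X) :
    ∃ s, s ∉ p ∧ s • φ = 0 := by
  obtain ⟨K, ⟨e⟩⟩ : ∃ K : CochainComplex (ModuleCat.{u} R) ℤ,
      Nonempty (DerivedCategory.Q.obj K ≅ X) :=
    ⟨_, ⟨DerivedCategory.Q.objObjPreimageIso X⟩⟩
  have hK := (isWide_LZ p).mem_of_iso ((DerivedCategory.homologyFunctor _ 0).mapIso e.symm) hX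
  rw [homology_mem_LZ_iff p K (-1) 0 1 (by omega) (by omega)] at hK
  obtain ⟨f, hf⟩ := exists_lift_of_isKProjective
    (P := (CochainComplex.singleFunctor (ModuleCat.{u} R) 0).obj (ModuleCat.of R R))
    (isFF_single (ModuleCat.of R R) 0).isKProjective (φ ≫ e.inv)
  let a : ModuleCat.of R R ⟶ K.X 0 :=
    (HomologicalComplex.singleObjXSelf (ComplexShape.up ℤ) 0 (ModuleCat.of R R)).inv ≫ f.f 0
  have ha : a ≫ K.d 0 1 = 0 := by
    have h0 : IsZero (((CochainComplex.singleFunctor (ModuleCat.{u} R) 0).obj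
      (ModuleCat.of R R)).X 1) := HomologicalComplex.isZero_single_obj_X _ _ _ _ (by omega)
    have h1 : f.f 0 ≫ K.d 0 1 = 0 := by
      rw [f.comm, h0.eq_zero_of_src (f.f 1), comp_zero]
    exact (Category.assoc _ _ _).trans ((congrArg (fun t => (HomologicalComplex.singleObjXSelf
      (ComplexShape.up ℤ) 0 (ModuleCat.of R R)).inv ≫ t) h1).trans comp_zero)
  obtain ⟨s, hs, y, hy⟩ := hK (a (1 : R)) (by
    rw [← ModuleCat.comp_apply, ha]; rfl)
  refine ⟨s, hs, ?_⟩
  have : DerivedCategory.Q.map (s • f) = 0 := by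
    refine Q_map_eq_zero_of_single (s • f) (ModuleCat.ofHom (LinearMap.toSpanSingleton R _ y)) ?_
    ext
    show s • a (1 : R) = K.d (-1) 0 ((1 : R) • y)
    rw [hy, one_smul]
  rw [CategoryTheory.Functor.map_smul] at this
  have h2 : (s • φ) ≫ e.inv = 0 := by
    rw [Linear.smul_comp]
    exact (congrArg (fun t => s • t) hf.symm).trans this
  rw [← cancel_mono e.inv, h2, zero_comp]

lemma isThick_locallyZero (p : Ideal R) [p.IsPrime] (X : DerivedCategory (ModuleCat.{u} R)) :
    IsThickSubcategory {W : DerivedCategory (ModuleCat.{u} R) | ∀ (n : ℤ) (φ : W ⟶ X⟦n⟧),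
      ∃ s, s ∉ p ∧ s • φ = 0} where
  mem_of_iso := by
    intro W W' e h n φ
    obtain ⟨s, hs, h'⟩ := h n (e.hom ≫ φ)
    refine ⟨s, hs, ?_⟩
    rwa [← Linear.comp_smul, ← cancel_epi e.inv, Iso.inv_hom_id_assoc, comp_zero] at h'
  zero_mem := fun n φ => ⟨1, (Ideal.ne_top_iff_one p).1 Ideal.IsPrime.ne_top',
    (isZero_zero _).eq_of_src _ _⟩
  shift_mem := by
    intro W k h n φ
    let e : (X⟦n - k⟧)⟦k⟧ ≅ X⟦n⟧ := (shiftFunctorAdd' _ (n - k) k n (by omega)).symm.app X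
    obtain ⟨ψ, hψ⟩ := (shiftFunctor _ k).map_surjective (φ ≫ e.inv)
    obtain ⟨s, hs, h'⟩ := h (n - k) ψ
    refine ⟨s, hs, ?_⟩
    rw [← cancel_mono e.inv, Linear.smul_comp, ← hψ, ← CategoryTheory.Functor.map_smul, h',
      CategoryTheory.Functor.map_zero, zero_comp]
  ext₂ := by
    intro T' hT h₁ h₃ n φ
    obtain ⟨s, hs, h⟩ := h₁ n (T'.mor₁ ≫ φ)
    rw [← Linear.comp_smul] at h
    obtain ⟨ψ, hψ⟩ := Triangle.yoneda_exact₂ _ hT _ h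
    obtain ⟨t, ht, h'⟩ := h₃ n ψ
    refine ⟨t * s, fun hm => (Ideal.IsPrime.mem_or_mem inferInstance hm).elim ht hs, ?_⟩
    rw [mul_smul, hψ, ← Linear.comp_smul, h', comp_zero]
  retract_mem := by
    intro W W' i r hir h n φ
    obtain ⟨s, hs, h'⟩ := h n (r ≫ φ)
    refine ⟨s, hs, ?_⟩
    rw [← Category.id_comp φ, ← hir, Category.assoc, ← Linear.comp_smul, h', comp_zero]

/-- A small object with homology locally zero at `p` is killed by an element outside `p`. -/
lemma exists_mem_annIdeal {p : Ideal R} [p.IsPrime] {X : DerivedCategory (ModuleCat.{u} R)}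
    (hX : ∀ n, (DerivedCategory.homologyFunctor _ n).obj X ∈ LZ p) (hs : IsSmallObject X) :
    ∃ s, s ∉ p ∧ s ∈ annIdeal R X := by
  have h := hs _ (isThick_locallyZero p X) (by
    intro n φ
    refine exists_smul_eq_zero_unit ?_ φ
    refine (isWide_LZ p).mem_of_iso ?_ (hX n)
    exact (((DerivedCategory.homologyFunctor (ModuleCat.{u} R) 0).shiftIso n 0 n
      (by omega)).app X).symm)
  obtain ⟨s, hs, h'⟩ := h 0 ((shiftFunctorZero (DerivedCategory (ModuleCat.{u} R)) ℤ).inv.app X)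
  refine ⟨s, hs, ?_⟩
  rw [mem_annIdeal,
    ← cancel_mono ((shiftFunctorZero (DerivedCategory (ModuleCat.{u} R)) ℤ).inv.app X),
    Linear.smul_comp, Category.id_comp, h', zero_comp]

end LocallyZero

/-! ## Part 6: tensoring with a module -/

section Tensor

open TensorProduct

variable {R : Type u} [CommRing R]

/-- The termwise tensor product of a complex with a module. -/
noncomputable def tensC (Y : CochainComplex (ModuleCat.{u} R) ℤ) (M : ModuleCat.{u} R) :
    CochainComplex (ModuleCat.{u} R) ℤ where
  X i := ModuleCat.of R (Y.X i ⊗[R] M)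
  d i j := ModuleCat.ofHom ((Y.d i j).hom.rTensor M)
  shape i j h := by
    rw [Y.shape i j h, ModuleCat.hom_zero, LinearMap.rTensor_zero, ModuleCat.ofHom_zero]
  d_comp_d' i j k _ _ := by
    rw [← ModuleCat.ofHom_comp, ← LinearMap.rTensor_comp, ← ModuleCat.hom_comp,
      Y.d_comp_d, ModuleCat.hom_zero, LinearMap.rTensor_zero, ModuleCat.ofHom_zero]

/-- Functoriality of `tensC` in the module. -/
noncomputable def tensMap (Y : CochainComplex (ModuleCat.{u} R) ℤ) {M N : ModuleCat.{u} R}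
    (g : M →ₗ[R] N) : tensC Y M ⟶ tensC Y N where
  f i := ModuleCat.ofHom (g.lTensor (Y.X i))
  comm' i j _ := by
    change ModuleCat.ofHom _ ≫ ModuleCat.ofHom _ = ModuleCat.ofHom _ ≫ ModuleCat.ofHom _
    rw [← ModuleCat.ofHom_comp, ← ModuleCat.ofHom_comp, LinearMap.rTensor_comp_lTensor,
      LinearMap.lTensor_comp_rTensor]

lemma tensMap_f_apply (Y : CochainComplex (ModuleCat.{u} R) ℤ) {M N : ModuleCat.{u} R}
    (g : M →ₗ[R] N) (i : ℤ) (z : Y.X i ⊗[R] M) :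
    (tensMap Y g).f i z = g.lTensor (Y.X i) z := rfl

lemma tensMap_comp (Y : CochainComplex (ModuleCat.{u} R) ℤ) {M N L : ModuleCat.{u} R}
    (g : M →ₗ[R] N) (h : N →ₗ[R] L) : tensMap Y g ≫ tensMap Y h = tensMap Y (h ∘ₗ g) := by
  ext i : 1
  change ModuleCat.ofHom _ ≫ ModuleCat.ofHom _ = ModuleCat.ofHom _
  rw [← ModuleCat.ofHom_comp, ← LinearMap.lTensor_comp]

lemma tensMap_sum (Y : CochainComplex (ModuleCat.{u} R) ℤ) {M N : ModuleCat.{u} R}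
    {ι : Type*} (s : Finset ι) (g : ι → (M →ₗ[R] N)) :
    tensMap Y (∑ j ∈ s, g j) = ∑ j ∈ s, tensMap Y (g j) := by
  classical
  induction s using Finset.induction_on with
  | empty =>
    ext i : 1
    change ModuleCat.ofHom _ = 0
    rw [Finset.sum_empty, LinearMap.lTensor_zero, ModuleCat.ofHom_zero]
  | insert j s hj ih =>
    rw [Finset.sum_insert hj, Finset.sum_insert hj, ← ih]
    ext i : 1
    change ModuleCat.ofHom _ = ModuleCat.ofHom _ + ModuleCat.ofHom _
    rw [LinearMap.lTensor_add, ModuleCat.ofHom_add]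
    rfl

lemma tensMap_zero (Y : CochainComplex (ModuleCat.{u} R) ℤ) {M N : ModuleCat.{u} R} :
    tensMap Y (0 : M →ₗ[R] N) = 0 := by
  simpa using tensMap_sum Y (∅ : Finset ℕ) (fun _ => (0 : M →ₗ[R] N))

/-- Tensoring with the ring does nothing. -/
noncomputable def tensUnit (Y : CochainComplex (ModuleCat.{u} R) ℤ) :
    tensC Y (ModuleCat.of R R) ≅ Y :=
  HomologicalComplex.Hom.isoOfComponents
    (fun i => (TensorProduct.rid R (Y.X i)).toModuleIso) (by
      intro i j _
      apply ModuleCat.hom_ext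
      apply TensorProduct.ext'
      intro x y
      change (Y.d i j).hom (TensorProduct.rid R (Y.X i) (x ⊗ₜ y)) =
        TensorProduct.rid R (Y.X j) ((Y.d i j).hom x ⊗ₜ y)
      rw [TensorProduct.rid_tmul, TensorProduct.rid_tmul, map_smul])

/-- The coordinate projector of a free module. -/
noncomputable def coordProj (R : Type u) [CommRing R] {ι : Type u} (j : ι) :
    (ι →₀ R) →ₗ[R] (ι →₀ R) := Finsupp.lsingle j ∘ₗ Finsupp.lapply j

lemma sum_coordProj {ι : Type u} (s : Finset ι) (x : ι →₀ R) (hx : x.support ⊆ s) :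
    (∑ j ∈ s, coordProj R j) x = x := by
  classical
  rw [LinearMap.sum_apply]
  change ∑ j ∈ s, Finsupp.single j (x j) = x
  conv_rhs => rw [← Finsupp.sum_single x]
  rw [Finsupp.sum]
  refine (Finset.sum_subset hx ?_).symm
  intro j _ hj
  rw [Finsupp.notMem_support_iff.1 hj, Finsupp.single_zero]

lemma exists_finset_tensor {V : Type u} [AddCommGroup V] [Module R V] {ι : Type u}
    (z : V ⊗[R] (ι →₀ R)) : ∃ s : Finset ι, ∀ s', s ⊆ s' →
      (∑ j ∈ s', coordProj R j).lTensor V z = z := by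
  classical
  induction z using TensorProduct.induction_on with
  | zero => exact ⟨∅, fun s' _ => map_zero _⟩
  | tmul v x =>
    exact ⟨x.support, fun s' hs' => by rw [LinearMap.lTensor_tmul, sum_coordProj s' x hs']⟩
  | add z w hz hw =>
    obtain ⟨s, hs⟩ := hz
    obtain ⟨t, ht⟩ := hw
    exact ⟨s ∪ t, fun s' hs' => by
      rw [map_add, hs s' (Finset.union_subset_left hs'), ht s' (Finset.union_subset_right hs')]⟩

lemma exists_finset_lin {U V : Type u} [AddCommGroup V] [Module R V] [AddCommGroup U] [Module R U]
    [Module.Finite R U] {ι : Type u}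
    (f : U →ₗ[R] V ⊗[R] (ι →₀ R)) : ∃ s : Finset ι, ∀ s', s ⊆ s' → ∀ x,
      (∑ j ∈ s', coordProj R j).lTensor V (f x) = f x := by
  classical
  obtain ⟨G, hG⟩ := Module.Finite.fg_top (R := R) (M := U)
  choose t ht using fun z : V ⊗[R] (ι →₀ R) => exists_finset_tensor z
  refine ⟨G.biUnion fun g => t (f g), fun s' hs' x => ?_⟩
  have : ((∑ j ∈ s', coordProj R j).lTensor V) ∘ₗ f = f := by
    apply LinearMap.ext_on_range (v := fun g : G => (g : U))
    · simpa using hG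
    · intro g
      exact ht _ s' ((Finset.subset_biUnion_of_mem (fun g => t (f g)) g.2).trans hs')
  exact LinearMap.congr_fun this x

lemma exists_finset_hom {P Y : CochainComplex (ModuleCat.{u} R) ℤ} (hP : IsFF P) {ι : Type u}
    (f : P ⟶ tensC Y (ModuleCat.of R (ι →₀ R))) : ∃ s : Finset ι,
      f ≫ tensMap Y (∑ j ∈ s, coordProj R j) = f := by
  classical
  obtain ⟨a, b, hab⟩ := hP.bdd
  have := hP.finite
  choose t ht using fun i : ℤ => exists_finset_lin (R := R) (U := P.X i) (V := Y.X i) (f.f i).hom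
  refine ⟨(Finset.Icc a b).biUnion t, ?_⟩
  ext i : 1
  by_cases hi : i ∈ Finset.Icc a b
  · ext x
    exact ht i _ (Finset.subset_biUnion_of_mem t hi) x
  · exact (hab i (by rw [Finset.mem_Icc] at hi; omega)).eq_of_src _ _

variable [HasDerivedCategory.{w} (ModuleCat.{u} R)]

lemma fac_tens_free {D : Set (DerivedCategory (ModuleCat.{u} R))} (hD : IsThickSubcategory D)
    {P Y : CochainComplex (ModuleCat.{u} R) ℤ} (hP : IsFF P) (hY : DerivedCategory.Q.obj Y ∈ D)
    {ι : Type u} (φ : DerivedCategory.Q.obj P ⟶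
      DerivedCategory.Q.obj (tensC Y (ModuleCat.of R (ι →₀ R)))) : Fac D φ := by
  obtain ⟨f, rfl⟩ := exists_lift_of_isKProjective hP.isKProjective φ
  obtain ⟨s, hs⟩ := exists_finset_hom hP f
  rw [← hs, tensMap_sum, Preadditive.comp_sum, CategoryTheory.Functor.map_sum]
  refine Fac.sum hD s _ fun j _ => ?_
  have : tensMap Y (M := ModuleCat.of R (ι →₀ R)) (N := ModuleCat.of R (ι →₀ R)) (coordProj R j) =
    tensMap Y (M := ModuleCat.of R (ι →₀ R)) (N := ModuleCat.of R R) (Finsupp.lapply j) ≫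
    tensMap Y (M := ModuleCat.of R R) (N := ModuleCat.of R (ι →₀ R)) (Finsupp.lsingle j) := by
    rw [tensMap_comp]; rfl
  rw [this]
  refine ⟨DerivedCategory.Q.obj (tensC Y (ModuleCat.of R R)),
    hD.mem_of_iso (DerivedCategory.Q.mapIso (tensUnit Y).symm) hY,
    DerivedCategory.Q.map (f ≫ tensMap Y (Finsupp.lapply j)),
    DerivedCategory.Q.map (tensMap Y (Finsupp.lsingle j)), ?_⟩
  rw [← CategoryTheory.Functor.map_comp, Category.assoc]

lemma tens_shortExact {Y : CochainComplex (ModuleCat.{u} R) ℤ} (hY : IsFF Y)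
    {M N L : ModuleCat.{u} R} (g : M →ₗ[R] N) (h : N →ₗ[R] L) (hg : Function.Injective g)
    (hh : Function.Surjective h) (hgh : Function.Exact g h) :
    (ShortComplex.mk (tensMap Y g) (tensMap Y h) (by
      rw [tensMap_comp, hgh.linearMap_comp_eq_zero, tensMap_zero])).ShortExact := by
  have := hY.free
  apply HomologicalComplex.shortExact_of_degreewise_shortExact
  intro i
  refine ModuleCat.shortComplex_shortExact _ ?_ ?_ ?_
  · exact lTensor_exact (Y.X i) hgh hh
  · exact Module.Flat.lTensor_preserves_injective_linearMap (M := Y.X i) g hg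
  · exact LinearMap.lTensor_surjective (Y.X i) hh

variable (R) in
lemma fac_of_ext_one {S D : Set (DerivedCategory (ModuleCat.{u} R))} (hS : IsThickSubcategory S)
    (hD : IsThickSubcategory D) (hDS : D ⊆ S) {A B C : DerivedCategory (ModuleCat.{u} R)}
    {u : A ⟶ B} {v : B ⟶ C} {w : C ⟶ A⟦(1 : ℤ)⟧} (hT : Triangle.mk u v w ∈ distTriang _)
    {W : DerivedCategory (ModuleCat.{u} R)} (hW : W ∈ S) (φ : W ⟶ B) (hb : Fac D (φ ≫ v))
    (ha : IsNegl S D (1 : R) A) : Fac D φ := by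
  have key := fac_of_ext (R := R) hS hD hDS _ hT 1 1 hW φ (by rw [one_smul]; exact hb) ha
  change Fac D (((1 : R) * 1) • φ) at key
  rwa [mul_one, one_smul] at key

lemma fac_tens_aux {S D : Set (DerivedCategory (ModuleCat.{u} R))} (hS : IsThickSubcategory S)
    (hD : IsThickSubcategory D) (hDS : D ⊆ S) (hSs : S = {X | IsSmallObject X})
    {Y : CochainComplex (ModuleCat.{u} R) ℤ} (hY : IsFF Y) (hYD : DerivedCategory.Q.obj Y ∈ D)
    (b : ℤ) (hb : ∀ i, b < i → IsZero (Y.X i)) (k : ℕ) :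
    ∀ (P : CochainComplex (ModuleCat.{u} R) ℤ), IsFF P → DerivedCategory.Q.obj P ∈ S →
      (∀ i, i < b + 1 - k → IsZero (P.X i)) →
      ∀ (M : ModuleCat.{u} R) (φ : DerivedCategory.Q.obj P ⟶ DerivedCategory.Q.obj (tensC Y M)),
        Fac D φ := by
  induction k with
  | zero =>
    intro P hP hPS hPz M φ
    obtain ⟨f, rfl⟩ := exists_lift_of_isKProjective hP.isKProjective φ
    have : f = 0 := by
      ext i : 1
      by_cases hi : i < b + 1
      · exact (hPz i (by simpa using hi)).eq_of_src _ _
      · have h1 := ModuleCat.subsingleton_of_isZero (hb i (by omega))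
        have h2 : Subsingleton (Y.X i ⊗[R] M) := inferInstance
        have h3 : IsZero ((tensC Y M).X i) := ModuleCat.isZero_of_subsingleton
          (ModuleCat.of R (Y.X i ⊗[R] M))
        exact h3.eq_of_tgt _ _
    rw [this, CategoryTheory.Functor.map_zero]
    exact Fac.zero hD _ _
  | succ k ih =>
    intro P hP hPS hPz M φ
    let h : (M →₀ R) →ₗ[R] M := Finsupp.linearCombination R id
    have hh : Function.Surjective h := Finsupp.linearCombination_id_surjective R M
    have hse := tens_shortExact hY (M := ModuleCat.of R (LinearMap.ker h))
      (N := ModuleCat.of R (M →₀ R)) (L := M) (LinearMap.ker h).subtype h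
      Subtype.val_injective hh (LinearMap.exact_subtype_ker_map h)
    obtain ⟨u, v, w, hT⟩ : ∃ (u : DerivedCategory.Q.obj (tensC Y (ModuleCat.of R (M →₀ R))) ⟶
        DerivedCategory.Q.obj (tensC Y M)) (v : DerivedCategory.Q.obj (tensC Y M) ⟶
        (DerivedCategory.Q.obj (tensC Y (ModuleCat.of R (LinearMap.ker h))))⟦(1 : ℤ)⟧)
        (w : _), Triangle.mk u v w ∈ distTriang _ :=
      ⟨_, _, _, rot_of_distTriang _ (DerivedCategory.triangleOfSES_distinguished hse)⟩
    refine fac_of_ext_one R hS hD hDS hT hPS φ ?_ ?_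
    · generalize φ ≫ _ = χ
      let e : (DerivedCategory.Q.obj (P⟦(-1 : ℤ)⟧))⟦(1 : ℤ)⟧ ≅ DerivedCategory.Q.obj P :=
        ((DerivedCategory.Q.commShiftIso (1 : ℤ)).app (P⟦(-1 : ℤ)⟧)).symm ≪≫
          DerivedCategory.Q.mapIso ((shiftFunctorCompIsoId _ (-1 : ℤ) 1 (by omega)).app P)
      obtain ⟨ψ, hψ⟩ := (shiftFunctor _ (1 : ℤ)).map_surjective (e.hom ≫ χ)
      have hfac := ih (P⟦(-1 : ℤ)⟧) (hP.shift (-1))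
        (hS.mem_of_iso ((DerivedCategory.Q.commShiftIso (-1 : ℤ)).app P).symm
          (hS.shift_mem _ _ hPS))
        (fun i hi => hPz (i + -1) (by push_cast; omega)) _ ψ
      have h4 := (hfac.map_shift hD 1).comp_left e.inv
      rw [hψ, Iso.inv_hom_id_assoc] at h4
      exact h4
    · intro W hW ψ
      rw [one_smul]
      obtain ⟨P', hP', _, i, r, hir⟩ := exists_ff_retract hS hW (by rw [hSs] at hW; exact hW)
      have h5 := (fac_tens_free hD hP' hYD (r ≫ ψ)).comp_left i
      rwa [← Category.assoc, hir, Category.id_comp] at h5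

lemma isNegl_tens {S D : Set (DerivedCategory (ModuleCat.{u} R))} (hS : IsThickSubcategory S)
    (hD : IsThickSubcategory D) (hDS : D ⊆ S) (hSs : S = {X | IsSmallObject X})
    {Y : CochainComplex (ModuleCat.{u} R) ℤ} (hY : IsFF Y) (hYD : DerivedCategory.Q.obj Y ∈ D)
    (M : ModuleCat.{u} R) : IsNegl S D (1 : R) (DerivedCategory.Q.obj (tensC Y M)) := by
  obtain ⟨_, b, hb⟩ := hY.bdd
  intro W hW φ
  rw [one_smul]
  obtain ⟨P, hP, hPS, i, r, hir⟩ := exists_ff_retract hS hW (by rw [hSs] at hW; exact hW)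
  obtain ⟨a, _, ha⟩ := hP.bdd
  have := (fac_tens_aux hS hD hDS hSs hY hYD b (fun i hi => hb i (Or.inr hi)) (b + 1 - a).toNat P hP
    hPS (fun i hi => ha i (Or.inl (by omega))) M (r ≫ φ)).comp_left i
  rwa [← Category.assoc, hir, Category.id_comp] at this

end Tensor

/-! ## Part 7: torsion objects are negligible -/

section Torsion

open TensorProduct

variable {R : Type u} [CommRing R]

/-- The module is annihilated by the ideal. -/
def Kd (I : Ideal R) (M : ModuleCat.{u} R) : Prop := ∀ r ∈ I, ∀ x : M, r • x = 0

lemma Kd.of_injective {I : Ideal R} {M N : ModuleCat.{u} R} (f : M →ₗ[R] N)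
    (hf : Function.Injective f) (hN : Kd I N) : Kd I M :=
  fun r hr x => hf (by rw [map_smul, hN r hr, map_zero])

lemma Kd.of_surjective {I : Ideal R} {M N : ModuleCat.{u} R} (f : M →ₗ[R] N)
    (hf : Function.Surjective f) (hN : Kd I M) : Kd I N := by
  intro r hr y
  obtain ⟨x, rfl⟩ := hf y
  rw [← map_smul, hN r hr, map_zero]

lemma Kd.of_iso {I : Ideal R} {M N : ModuleCat.{u} R} (e : M ≅ N) (h : Kd I M) : Kd I N :=
  Kd.of_injective e.symm.toLinearEquiv.toLinearMap e.symm.toLinearEquiv.injective h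

lemma tmul_eq_zero_of_mem_smul {J : Ideal R} {M : ModuleCat.{u} R} (hM : Kd J M)
    {N : Type u} [AddCommGroup N] [Module R N] {n : N} (hn : n ∈ J • (⊤ : Submodule R N)) (x : M) :
    n ⊗ₜ[R] x = 0 := by
  refine Submodule.smul_induction_on hn ?_ ?_
  · intro r hr n _
    rw [TensorProduct.smul_tmul, hM r hr, TensorProduct.tmul_zero]
  · intro a b ha hb
    rw [TensorProduct.add_tmul, ha, hb, add_zero]

lemma exists_single_maps {J : Ideal R} {M : ModuleCat.{u} R} (hM : Kd J M)
    (Y : CochainComplex (ModuleCat.{u} R) ℤ) (i j k : ℤ) (hij : i + 1 = j) (hjk : j + 1 = k)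
    (m : Y.X j) (l : Y.X j →ₗ[R] R) (hm : Y.d j k m ∈ J • (⊤ : Submodule R (Y.X k)))
    (hl : ∀ y : Y.X i, l (Y.d i j y) ∈ J) :
    ∃ (f : (HomologicalComplex.single (ModuleCat.{u} R) (ComplexShape.up ℤ) j).obj M ⟶ tensC Y M)
      (g : tensC Y M ⟶ (HomologicalComplex.single (ModuleCat.{u} R) (ComplexShape.up ℤ) j).obj M),
      f ≫ g = l m • 𝟙 _ := by
  subst hjk
  obtain rfl : i = j - 1 := by omega
  let a : M ⟶ (tensC Y M).X j := ModuleCat.ofHom (TensorProduct.mk R (Y.X j) M m)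
  let b : (tensC Y M).X j ⟶ M :=
    ModuleCat.ofHom (TensorProduct.lift ((LinearMap.lsmul R M) ∘ₗ l))
  have hab : a ≫ b = l m • 𝟙 M := by
    ext x
    change TensorProduct.lift ((LinearMap.lsmul R M) ∘ₗ l) (m ⊗ₜ x) = l m • x
    rw [TensorProduct.lift.tmul]
    rfl
  refine ⟨HomologicalComplex.mkHomFromSingle a ?_, HomologicalComplex.mkHomToSingle b ?_, ?_⟩
  · intro k hk
    obtain rfl : j + 1 = k := hk
    ext x
    exact tmul_eq_zero_of_mem_smul hM hm x
  · intro i hi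
    obtain rfl : i = j - 1 := by
      have : i + 1 = j := hi
      omega
    apply ModuleCat.hom_ext
    apply TensorProduct.ext'
    intro y x
    exact hM _ (hl y) x
  · apply HomologicalComplex.from_single_hom_ext
    rw [HomologicalComplex.comp_f, HomologicalComplex.mkHomFromSingle_f,
      HomologicalComplex.mkHomToSingle_f, Category.assoc, reassoc_of% hab,
      HomologicalComplex.smul_f_apply, HomologicalComplex.id_f, Linear.smul_comp, Linear.comp_smul,
      Category.id_comp, Iso.hom_inv_id]

variable [HasDerivedCategory.{w} (ModuleCat.{u} R)]

lemma isNegl_single_one {S D : Set (DerivedCategory (ModuleCat.{u} R))} (hS : IsThickSubcategory S)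
    (hD : IsThickSubcategory D) (hDS : D ⊆ S)
    (hSs : S = {X | IsSmallObject X})
    {J : Ideal R} {M : ModuleCat.{u} R} (hM : Kd J M)
    {Y : CochainComplex (ModuleCat.{u} R) ℤ} (hY : IsFF Y) (hYD : DerivedCategory.Q.obj Y ∈ D)
    (i j k : ℤ) (hij : i + 1 = j) (hjk : j + 1 = k)
    (m : Y.X j) (l : Y.X j →ₗ[R] R) (hm : Y.d j k m ∈ J • (⊤ : Submodule R (Y.X k)))
    (hl : ∀ y : Y.X i, l (Y.d i j y) ∈ J) :
    IsNegl S D (l m) ((DerivedCategory.singleFunctor (ModuleCat.{u} R) 0).obj M) := by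
  obtain ⟨f, g, hfg⟩ := exists_single_maps hM Y i j k hij hjk m l hm hl
  have h1 : IsNegl S D (l m) (DerivedCategory.Q.obj
      ((HomologicalComplex.single (ModuleCat.{u} R) (ComplexShape.up ℤ) j).obj M)) := by
    intro W hW φ
    have := (isNegl_tens hS hD hDS hSs hY hYD M W hW
      (φ ≫ DerivedCategory.Q.map f)).comp_right (DerivedCategory.Q.map g)
    rwa [one_smul, Category.assoc, ← CategoryTheory.Functor.map_comp, hfg,
      CategoryTheory.Functor.map_smul, CategoryTheory.Functor.map_id, Linear.comp_smul,
      Category.comp_id] at this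
  have h2 : IsNegl S D (l m) ((DerivedCategory.singleFunctor (ModuleCat.{u} R) j).obj M) := h1
  exact (h2.shift hS hD j).iso
    (((DerivedCategory.singleFunctors (ModuleCat.{u} R)).shiftIso j 0 j (by omega)).app M)

lemma isNegl_of_isZero {S D : Set (DerivedCategory (ModuleCat.{u} R))}
    (hD : IsThickSubcategory D) {A : DerivedCategory (ModuleCat.{u} R)} (hA : IsZero A) (s : R) :
    IsNegl S D s A := by
  intro W _ φ
  rw [hA.eq_of_tgt (s • φ) 0]
  exact Fac.zero hD _ _

lemma isNegl_single_pow {S D : Set (DerivedCategory (ModuleCat.{u} R))} (hS : IsThickSubcategory S)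
    (hD : IsThickSubcategory D) (hDS : D ⊆ S)
    {J : Ideal R} {s : R}
    (h : ∀ M : ModuleCat.{u} R, Kd J M →
      IsNegl S D s ((DerivedCategory.singleFunctor (ModuleCat.{u} R) 0).obj M)) (k : ℕ) :
    ∀ M : ModuleCat.{u} R, Kd (J ^ k) M →
      IsNegl S D (s ^ k) ((DerivedCategory.singleFunctor (ModuleCat.{u} R) 0).obj M) := by
  induction k with
  | zero =>
    intro M hM
    have h1 : Subsingleton M := ⟨fun x y => by
      have h2 (x : M) : x = 0 := by
        have := hM 1 (by simp) x
        rwa [one_smul] at this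
      rw [h2 x, h2 y]⟩
    exact isNegl_of_isZero hD (Functor.map_isZero _ (ModuleCat.isZero_of_subsingleton M)) _
  | succ k ih =>
    intro M hM
    let N : Submodule R M := J • (⊤ : Submodule R M)
    let E : ShortComplex (ModuleCat.{u} R) :=
      ShortComplex.mk (ModuleCat.ofHom N.subtype) (ModuleCat.ofHom N.mkQ) (by
        ext x
        exact (Submodule.Quotient.mk_eq_zero N).2 x.2)
    have hE : E.ShortExact := by
      refine ModuleCat.shortComplex_shortExact _ ?_ ?_ ?_
      · exact LinearMap.exact_subtype_mkQ N
      · exact Subtype.val_injective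
      · exact N.mkQ_surjective
    have h1 : Kd (J ^ k) (ModuleCat.of R N) := by
      intro r hr x
      apply Subtype.ext
      change r • (x : M) = 0
      refine Submodule.smul_induction_on x.2 ?_ ?_
      · intro t ht n _
        rw [← mul_smul]
        exact hM _ (by rw [pow_succ]; exact Ideal.mul_mem_mul hr ht) n
      · intro a b ha hb
        rw [smul_add, ha, hb, add_zero]
    have h2 : Kd J (ModuleCat.of R (M ⧸ N)) := by
      intro r hr x
      obtain ⟨x, rfl⟩ := N.mkQ_surjective x
      rw [← map_smul]
      exact (Submodule.Quotient.mk_eq_zero N).2 (Submodule.smul_mem_smul hr trivial)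
    rw [pow_succ]
    exact IsNegl.ext hS hD hDS hE.singleTriangle hE.singleTriangle_distinguished _ _
      (ih _ h1) (h _ h2)

lemma isNegl_bounded {S D : Set (DerivedCategory (ModuleCat.{u} R))} (hS : IsThickSubcategory S)
    (hD : IsThickSubcategory D) (hDS : D ⊆ S)
    {I : Ideal R} {s : R}
    (h : ∀ M : ModuleCat.{u} R, Kd I M →
      IsNegl S D s ((DerivedCategory.singleFunctor (ModuleCat.{u} R) 0).obj M)) (d : ℕ) :
    ∀ (a : ℤ) (X : DerivedCategory (ModuleCat.{u} R)), X.IsGE a → X.IsLE (a + d - 1) →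
      (∀ n, Kd I ((DerivedCategory.homologyFunctor _ n).obj X)) → IsNegl S D (s ^ d) X := by
  induction d with
  | zero =>
    intro a X _ _ _
    exact isNegl_of_isZero hD
      (DerivedCategory.TStructure.t.isZero X (a + (0 : ℕ) - 1) a (by simp)) _
  | succ d ih =>
    intro a X hGE hLE hI
    obtain ⟨A, B, u, v, w, hT, hA, hB⟩ : ∃ (A B : DerivedCategory (ModuleCat.{u} R))
        (u : A ⟶ X) (v : X ⟶ B) (w : B ⟶ A⟦(1 : ℤ)⟧), Triangle.mk u v w ∈ distTriang _ ∧
        A.IsLE a ∧ B.IsGE (a + 1) :=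
      ⟨_, _, _, _, _, DerivedCategory.TStructure.t.triangleLTGE_distinguished (a + 1) X,
        DerivedCategory.TStructure.t.isLE_truncLT_obj X (a + 1) a,
        DerivedCategory.TStructure.t.isGE_truncGE_obj X (a + 1) (a + 1)⟩
    rw [DerivedCategory.isGE_iff] at hGE hB
    rw [DerivedCategory.isLE_iff] at hLE hA
    have mono (n : ℤ) (hn : n ≤ a + 1) : Mono ((DerivedCategory.homologyFunctor _ n).map u) :=
      (DerivedCategory.HomologySequence.mono_homologyMap_mor₁_iff _ hT (n - 1) n (by omega)).2
        ((hB (n - 1) (by omega)).eq_of_src _ _)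
    have epi (n : ℤ) (hn : a ≤ n) : Epi ((DerivedCategory.homologyFunctor _ n).map v) :=
      (DerivedCategory.HomologySequence.epi_homologyMap_mor₂_iff _ hT n (n + 1) (by omega)).2
        ((hA (n + 1) (by omega)).eq_of_tgt _ _)
    have hA' : A.IsGE a := by
      rw [DerivedCategory.isGE_iff]
      intro i hi
      have := mono i (by omega)
      exact IsZero.of_mono ((DerivedCategory.homologyFunctor _ i).map u) (hGE i hi)
    have hB' : B.IsLE (a + 1 + d - 1) := by
      rw [DerivedCategory.isLE_iff]
      intro i hi
      have := epi i (by omega)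
      exact IsZero.of_epi ((DerivedCategory.homologyFunctor _ i).map v)
        (hLE i (by push_cast; omega))
    have hAle : A.IsLE a := (DerivedCategory.isLE_iff _ _).2 hA
    have hBge : B.IsGE (a + 1) := (DerivedCategory.isGE_iff _ _).2 hB
    have negB : IsNegl S D (s ^ d) B := by
      refine ih (a + 1) B hBge hB' fun n => ?_
      by_cases hn : a ≤ n
      · have := epi n hn
        exact Kd.of_surjective ((DerivedCategory.homologyFunctor _ n).map v).hom
          ((ModuleCat.epi_iff_surjective _).1 this) (hI n)
      · have := ModuleCat.subsingleton_of_isZero (hB n (by omega))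
        intro r _ x
        exact Subsingleton.elim _ _
    have negA : IsNegl S D s A := by
      obtain ⟨M, ⟨e⟩⟩ := DerivedCategory.exists_iso_singleFunctor_obj_of_isGE_of_isLE A a
      have hM : Kd I M := by
        have := mono a (by omega)
        have h1 : Kd I ((DerivedCategory.homologyFunctor _ a).obj A) :=
          Kd.of_injective ((DerivedCategory.homologyFunctor _ a).map u).hom
            ((ModuleCat.mono_iff_injective _).1 this) (hI a)
        have h2 : Kd I ((DerivedCategory.homologyFunctor _ a).obj
          (DerivedCategory.Q.obj ((HomologicalComplex.single _ (ComplexShape.up ℤ) a).obj M))) :=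
          h1.of_iso ((DerivedCategory.homologyFunctor _ a).mapIso e)
        exact h2.of_iso ((DerivedCategory.homologyFunctorFactors _ a).app _ ≪≫
          (HomologicalComplex.homologyFunctorSingleIso _ _ a).app M)
      refine IsNegl.iso ?_ ((h M hM).shift hS hD (-a))
      exact ((DerivedCategory.singleFunctors (ModuleCat.{u} R)).shiftIso (-a) a 0
        (by omega)).app M ≪≫ e.symm
    have := IsNegl.ext hS hD hDS _ hT s (s ^ d) negA negB
    rw [pow_succ']
    exact this

lemma kd_homology (X : DerivedCategory (ModuleCat.{u} R)) (n : ℤ) :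
    Kd (annIdeal R X) ((DerivedCategory.homologyFunctor _ n).obj X) := by
  intro r hr x
  obtain ⟨K, ⟨e⟩⟩ : ∃ K : CochainComplex (ModuleCat.{u} R) ℤ,
      Nonempty (DerivedCategory.Q.obj K ≅ X) :=
    ⟨_, ⟨DerivedCategory.Q.objObjPreimageIso X⟩⟩
  have h1 : DerivedCategory.Q.map (r • 𝟙 K) = 0 := by
    rw [CategoryTheory.Functor.map_smul, CategoryTheory.Functor.map_id]
    have := smul_eq_zero_of_mem_annIdeal hr e.inv
    rw [← cancel_epi e.inv, Linear.comp_smul, Category.comp_id, this, comp_zero]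
  have h2 : HomologicalComplex.homologyMap (r • 𝟙 K) n = 0 := by
    have := DerivedCategory.homologyFunctorFactors_hom_naturality (r • 𝟙 K) n
    rw [h1, CategoryTheory.Functor.map_zero, zero_comp] at this
    exact (cancel_epi ((DerivedCategory.homologyFunctorFactors (ModuleCat.{u} R) n).hom.app K)).1
      (this.symm.trans comp_zero.symm)
  change ShortComplex.homologyMap (r • 𝟙 (K.sc n)) = 0 at h2
  rw [ShortComplex.homologyMap_smul, ShortComplex.homologyMap_id] at h2
  have h3 : Kd (Ideal.span {r}) (K.homology n) := by
    intro t ht y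
    obtain ⟨c, rfl⟩ := Ideal.mem_span_singleton'.1 ht
    have h4 : r • y = 0 := congrArg (fun f : K.homology n ⟶ K.homology n => f y) h2
    rw [mul_smul, h4, smul_zero]
  have h5 : Kd (Ideal.span {r}) ((DerivedCategory.homologyFunctor _ n).obj X) :=
    h3.of_iso (((DerivedCategory.homologyFunctorFactors (ModuleCat.{u} R) n).app K).symm ≪≫
      (DerivedCategory.homologyFunctor _ n).mapIso e)
  exact h5 r (Ideal.mem_span_singleton_self r) x

lemma small_bounded {X : DerivedCategory (ModuleCat.{u} R)} (hX : IsSmallObject X) :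
    ∃ (a : ℤ) (d : ℕ), X.IsGE a ∧ X.IsLE (a + d - 1) := by
  obtain ⟨_, ⟨P, hP, ⟨e⟩⟩, i, r, hir⟩ := small_retract_ff hX
  obtain ⟨a, b, hab⟩ := hP.bdd
  have hz (n : ℤ) (hn : n < a ∨ b < n) :
      IsZero ((DerivedCategory.homologyFunctor (ModuleCat.{u} R) n).obj X) := by
    have h1 : IsZero ((DerivedCategory.homologyFunctor _ n).obj (DerivedCategory.Q.obj P)) := by
      refine IsZero.of_iso ?_ ((DerivedCategory.homologyFunctorFactors (ModuleCat.{u} R) n).app P)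
      exact ShortComplex.isZero_homology_of_isZero_X₂ _ (hab n hn)
    have h2 := h1.of_iso ((DerivedCategory.homologyFunctor _ n).mapIso e.symm)
    rw [IsZero.iff_id_eq_zero, ← CategoryTheory.Functor.map_id, ← hir,
      CategoryTheory.Functor.map_comp,
      h2.eq_of_tgt ((DerivedCategory.homologyFunctor _ n).map i) 0, zero_comp]
  refine ⟨a, (b + 1 - a).toNat, (DerivedCategory.isGE_iff _ _).2 fun n hn => hz n (Or.inl hn),
    (DerivedCategory.isLE_iff _ _).2 fun n hn => hz n ?_⟩
  omega

end Torsion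

/-! ## Part 8: conclusion -/

section Conclusion

variable {R : Type u} [CommRing R] [HasDerivedCategory.{w} (ModuleCat.{u} R)]

variable (R) in
lemma isThick_small :
    IsThickSubcategory {X : DerivedCategory (ModuleCat.{u} R) | IsSmallObject X} :=
  isThick_thickClosure (unitObj R)

lemma mem_of_homology {D : Set (DerivedCategory (ModuleCat.{u} R))} (hD : IsThickSubcategory D)
    (hDsmall : ∀ X ∈ D, IsSmallObject X) {X : DerivedCategory (ModuleCat.{u} R)}
    (hX : X ∈ fSet (gSet D)) : X ∈ D := by
  refine core (R := R) (isThick_small R) hD hX.1 ?_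
  intro p hp
  by_cases H : ∀ P : CochainComplex (ModuleCat.{u} R) ℤ, IsFF P → DerivedCategory.Q.obj P ∈ D →
      ∀ n, (DerivedCategory.homologyFunctor _ n).obj (DerivedCategory.Q.obj P) ∈ LZ p
  · left
    refine exists_mem_annIdeal (fun n => ?_) hX.1
    refine hX.2 n (LZ p) ⟨isWide_LZ p, ?_⟩
    rintro M ⟨Y, hY, k, ⟨e⟩⟩
    refine (isWide_LZ p).mem_of_iso e ?_
    obtain ⟨P, hP, hPD, a, b, hab⟩ := exists_ff_retract hD hY (hDsmall Y hY)
    refine LZ.of_injective ((DerivedCategory.homologyFunctor _ k).map a).hom ?_ (H P hP hPD k)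
    refine (ModuleCat.mono_iff_injective _).1 ?_
    have : IsSplitMono a := IsSplitMono.mk' ⟨b, hab⟩
    infer_instance
  · right
    push Not at H
    obtain ⟨Y, hY, hYD, n, hn⟩ := H
    rw [homology_mem_LZ_iff p Y (n - 1) n (n + 1) (by omega) rfl] at hn
    have hfree := hY.free
    have hfin := hY.finite
    rcases free_dichotomy p (Y.d (n - 1) n).hom (Y.d n (n + 1)).hom (by
      rw [← ModuleCat.hom_comp, Y.d_comp_d, ModuleCat.hom_zero]) with
      ⟨t, ht, h⟩ | ⟨m, l, J, hJ, hJp, hs, hm, hl⟩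
    · exact absurd (fun z hz => ⟨t, ht, h z hz⟩) hn
    · refine ⟨l m, hs, J, hJ, hJp, ?_⟩
      intro Z hZ hJZ
      obtain ⟨k, hk⟩ := Ideal.exists_pow_le_of_le_radical_of_fg hJZ hJ
      obtain ⟨a, d, hGE, hLE⟩ := small_bounded hZ
      have h1 : ∀ M : ModuleCat.{u} R, Kd J M → IsNegl {X | IsSmallObject X} D (l m)
          ((DerivedCategory.singleFunctor (ModuleCat.{u} R) 0).obj M) := fun M hM =>
        isNegl_single_one (isThick_small R) hD hDsmall rfl hM hY hYD (n - 1) n (n + 1) (by omega)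
          rfl m l hm hl
      have h2 := isNegl_bounded (isThick_small R) hD hDsmall
        (isNegl_single_pow (isThick_small R) hD hDsmall h1 k) d a Z hGE hLE
        (fun i r hr x => kd_homology Z i r (hk hr) x)
      exact ⟨k * d, by rw [pow_mul]; exact h2 Z hZ (𝟙 Z)⟩

end Conclusion

/-- Corollary 2.2, from Thomason's theorem: for any commutative ring
`R`, the map `f` from wide subcategories of `C₀` to thick subcategories of small objects
of `D(R)` is surjective: for every thick subcategory `D` of small objects,
`f(g(D)) = D`. -/
theorem f_surjective (R : Type u) [CommRing R]
    [HasDerivedCategory.{w} (ModuleCat.{u} R)]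
    (D : Set (DerivedCategory (ModuleCat.{u} R))) (hD : IsThickSubcategory D)
    (hDsmall : ∀ X ∈ D, IsSmallObject X) :
    fSet (gSet D) = D := by
  refine Set.Subset.antisymm (fun X hX => mem_of_homology hD hDsmall hX) (fun X hX => ?_)
  exact ⟨hDsmall X hX, fun n => Set.mem_sInter.2 fun C hC => hC.2 ⟨X, hX, n, ⟨Iso.refl _⟩⟩⟩
end

section
/- Let R be a ring and M a left R-module. If the complex S^0 M (M concentrated in degree 0) is a small object of D(R), then M has finite projective dimension, i.e. there is an i ≥ 0 such that Ext^j_R(M, N) = 0 for all R-modules N and all j > i. -/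
open CategoryTheory CategoryTheory.Limits CategoryTheory.Pretriangulated ZeroObject

universe w u

/-- An `R`-module `M` has finite projective dimension if there is an `i` such that
`Ext^j(M, N) = 0` for all modules `N` and all `j > i`. -/
def HasFiniteProjectiveDimension (R : Type u) [Ring R] (M : ModuleCat.{u} R) : Prop :=
  ∃ i : ℕ, ∀ (N : ModuleCat.{u} R) (j : ℕ), i < j →
    Subsingleton (((_root_.Ext ℤ (ModuleCat.{u} R) j).obj (Opposite.op M)).obj N)

/-- If all `Ext`-groups (morphisms in the derived category) vanish in degree `j + 1`, so does the
`Ext`-group defined by deriving `Hom`. -/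
lemma subsingleton_Ext_of_hom_eq_zero (R : Type u) [Ring R]
    [HasDerivedCategory.{w} (ModuleCat.{u} R)] (M N : ModuleCat.{u} R) (j : ℕ)
    (h : ∀ f : (DerivedCategory.singleFunctor (ModuleCat.{u} R) 0).obj M ⟶
      ((DerivedCategory.singleFunctor (ModuleCat.{u} R) 0).obj N)⟦((j + 1 : ℕ) : ℤ)⟧, f = 0) :
    Subsingleton (((_root_.Ext ℤ (ModuleCat.{u} R) (j + 1)).obj (Opposite.op M)).obj N) := by
  have : HasExt.{w} (ModuleCat.{u} R) := hasExt_of_hasDerivedCategory _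
  have hs : Subsingleton (Abelian.Ext.{w} M N (j + 1)) :=
    ⟨fun a b => Abelian.Ext.homEquiv.injective ((h _).trans (h _).symm)⟩
  let P := projectiveResolution M
  apply ModuleCat.subsingleton_of_isZero
  refine IsZero.of_iso ?_ (P.isoExt (j + 1) N)
  rw [← HomologicalComplex.exactAt_iff_isZero_homology,
    HomologicalComplex.exactAt_iff' _ j (j + 1) (j + 2) (by simp) (by simp),
    ShortComplex.moduleCat_exact_iff]
  intro (f : P.complex.X (j + 1) ⟶ N) hf
  have hf' : P.complex.d (j + 2) (j + 1) ≫ f = 0 := hf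
  obtain ⟨g, hg⟩ := (P.extMk_eq_zero_iff f (j + 2) rfl hf' j rfl).1 (Subsingleton.elim _ _)
  exact ⟨g, hg⟩

/-- The objects with no morphism to high shifts of modules. -/
def homBounded (R : Type u) [Ring R] [HasDerivedCategory.{w} (ModuleCat.{u} R)] :
    Set (DerivedCategory (ModuleCat.{u} R)) :=
  {X | ∃ n : ℤ, ∀ (N : ModuleCat.{u} R) (j : ℤ), n < j →
    ∀ f : X ⟶ ((DerivedCategory.singleFunctor (ModuleCat.{u} R) 0).obj N)⟦j⟧, f = 0}

lemma isThick_homBounded (R : Type u) [Ring R] [HasDerivedCategory.{w} (ModuleCat.{u} R)] :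
    IsThickSubcategory (homBounded R) where
  mem_of_iso := by
    rintro X Y e ⟨n, hn⟩
    refine ⟨n, fun N j hj f => ?_⟩
    rw [← cancel_epi e.hom, hn N j hj (e.hom ≫ f), comp_zero]
  zero_mem := ⟨0, fun N j hj f => (isZero_zero _).eq_of_src _ _⟩
  shift_mem := by
    rintro X m ⟨n, hn⟩
    refine ⟨n + m, fun N j hj f => ?_⟩
    let S := (DerivedCategory.singleFunctor (ModuleCat.{u} R) 0).obj N
    let e : (S⟦j - m⟧)⟦m⟧ ≅ S⟦j⟧ :=
      ((shiftFunctorAdd' (DerivedCategory (ModuleCat.{u} R)) (j - m) m j (by lia)).app S).symm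
    obtain ⟨g, hg⟩ := (shiftFunctor (DerivedCategory (ModuleCat.{u} R)) m).map_surjective
      (f ≫ e.inv)
    rw [hn N (j - m) (by lia) g, Functor.map_zero] at hg
    rw [← cancel_mono e.inv, ← hg, zero_comp]
  ext₂ := by
    rintro T hT ⟨n, hn⟩ ⟨m, hm⟩
    refine ⟨max n m, fun N j hj f => ?_⟩
    obtain ⟨g, rfl⟩ := T.yoneda_exact₂ hT f (hn N j (by lia) _)
    rw [hm N j (by lia) g, comp_zero]
  retract_mem := by
    rintro X Y i r h ⟨n, hn⟩
    refine ⟨n, fun N j hj f => ?_⟩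
    rw [← Category.id_comp f, ← h, Category.assoc, hn N j hj (r ≫ f), comp_zero]

lemma ring_mem_homBounded (R : Type u) [Ring R] [HasDerivedCategory.{w} (ModuleCat.{u} R)] :
    (DerivedCategory.singleFunctor (ModuleCat.{u} R) 0).obj (ModuleCat.of R R) ∈
      homBounded R := by
  have : HasExt.{w} (ModuleCat.{u} R) := hasExt_of_hasDerivedCategory _
  have : Projective (ModuleCat.of R R) := (IsProjective.iff_projective R).1 inferInstance
  refine ⟨0, fun N j hj f => ?_⟩
  obtain ⟨k, rfl⟩ : ∃ k : ℕ, j = ((k + 1 : ℕ) : ℤ) := ⟨(j - 1).toNat, by lia⟩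
  apply Abelian.Ext.homEquiv.symm.injective
  exact (Abelian.Ext.eq_zero_of_projective _).trans (Abelian.Ext.eq_zero_of_projective _).symm

/-- Lemma 3.3: if the complex `S⁰M` (`M` concentrated in degree `0`)
is a small object of `D(R)`, then `M` has finite projective dimension: there is `i` with
`Ext^j_R(M, N) = 0` for all modules `N` and all `j > i`. -/
theorem finite_proj_dim_of_small (R : Type u) [Ring R]
    [HasDerivedCategory.{w} (ModuleCat.{u} R)]
    (M : ModuleCat.{u} R)
    (h : IsSmallObject ((DerivedCategory.singleFunctor (ModuleCat.{u} R) 0).obj M)) :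
    HasFiniteProjectiveDimension R M := by
  obtain ⟨n, hn⟩ := h _ (isThick_homBounded R) (ring_mem_homBounded R)
  refine ⟨n.toNat, fun N j hj => ?_⟩
  obtain ⟨k, rfl⟩ : ∃ k, j = k + 1 := ⟨j - 1, by lia⟩
  exact subsingleton_Ext_of_hom_eq_zero R M N k (hn N _ (by lia))
end

section
/- Let R be a left coherent ring and M a finitely presented left R-module of finite projective dimension. Then S^0 M (the complex M concentrated in degree 0) is a small object of D(R). -/
open CategoryTheory CategoryTheory.Limits CategoryTheory.Pretriangulated ZeroObject

universe w u

/-- A module all of whose finitely generated submodules are finitely presented. -/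
def FGSubFP (R : Type u) [Ring R] (N : Type u) [AddCommGroup N] [Module R N] : Prop :=
  ∀ K : Submodule R N, K.FG → Module.FinitePresentation R K

theorem FGSubFP.of_injective {R : Type u} [Ring R] {A : Type u} {K : Type u} [AddCommGroup A]
    [Module R A] [AddCommGroup K] [Module R K] (hA : FGSubFP R A) (f : K →ₗ[R] A)
    (hf : Function.Injective f) (hK : Module.Finite R K) : Module.FinitePresentation R K := by
  have h : (LinearMap.range f).FG := by
    rw [LinearMap.range_eq_map]
    exact Submodule.FG.map _ hK.1
  have := hA _ h
  exact Module.FinitePresentation.of_equiv (LinearEquiv.ofInjective f hf).symm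

theorem FGSubFP.of_linearEquiv {R : Type u} [Ring R] {A B : Type u} [AddCommGroup A]
    [Module R A] [AddCommGroup B] [Module R B] (e : A ≃ₗ[R] B) (hA : FGSubFP R A) :
    FGSubFP R B := fun K hK =>
  hA.of_injective (e.symm.toLinearMap ∘ₗ K.subtype)
    (e.symm.injective.comp K.injective_subtype) (Module.Finite.iff_fg.2 hK)

theorem FGSubFP.prod {R : Type u} [Ring R] {A B : Type u} [AddCommGroup A]
    [Module R A] [AddCommGroup B] [Module R B] (hA : FGSubFP R A) (hB : FGSubFP R B) :
    FGSubFP R (A × B) := by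
  intro K hK
  have hKf : Module.Finite R K := Module.Finite.iff_fg.2 hK
  let l : K →ₗ[R] B := LinearMap.snd R A B ∘ₗ K.subtype
  have h1 : Module.FinitePresentation R (LinearMap.range l) := by
    apply hB
    rw [LinearMap.range_eq_map]
    exact Submodule.FG.map _ hKf.1
  have h2 : (LinearMap.ker l.rangeRestrict).FG :=
    Module.FinitePresentation.fg_ker _ l.surjective_rangeRestrict
  have h3 : Module.FinitePresentation R (LinearMap.ker l.rangeRestrict) := by
    have h4 : Module.Finite R (LinearMap.ker l.rangeRestrict) := Module.Finite.iff_fg.2 h2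
    refine hA.of_injective (K := LinearMap.ker l.rangeRestrict)
      (LinearMap.fst R A B ∘ₗ K.subtype ∘ₗ (LinearMap.ker l.rangeRestrict).subtype) ?_
      h4
    rintro ⟨⟨⟨a, b⟩, hx⟩, hx'⟩ ⟨⟨⟨c, d⟩, hy⟩, hy'⟩ h
    rw [LinearMap.ker_rangeRestrict] at hx' hy'
    have hb : b = 0 := hx'
    have hd : d = 0 := hy'
    have hac : a = c := h
    subst hb hd hac
    rfl
  exact Module.finitePresentation_of_ker l.rangeRestrict l.surjective_rangeRestrict

theorem FGSubFP.pi {R : Type u} [Ring R] (hR : IsLeftCoherentRing R) (k : ℕ) :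
    FGSubFP R (Fin k → R) := by
  refine Module.pi_induction' (motive := fun N _ _ ↦ FGSubFP R N)
      (motive' := fun N _ _ ↦ FGSubFP R N) R ?_ ?_ ?_ ?_ (fun _ : Fin k => R) (fun _ => hR)
  · exact fun e h ↦ h.of_linearEquiv e
  · exact fun e h ↦ h.of_linearEquiv e
  · intro K _
    infer_instance
  · introv hN hN'
    exact hN.prod hN'

/-- Vanishing of the derived-functor `Ext` bounds the projective dimension. -/
theorem hasProjectiveDimensionLT_of_ext {R : Type u} [Ring R] {M : ModuleCat.{u} R} {i : ℕ}
    (h : ∀ (N : ModuleCat.{u} R) (j : ℕ), i < j →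
      Subsingleton (((_root_.Ext ℤ (ModuleCat.{u} R) j).obj (Opposite.op M)).obj N)) :
    HasProjectiveDimensionLT M (i + 1) := by
  let := HasExt.standard (ModuleCat.{u} R)
  let P : ProjectiveResolution M := ProjectiveResolution.of M
  rw [hasProjectiveDimensionLT_iff]
  intro j hj Y e
  obtain ⟨p, rfl⟩ : ∃ p, j = p + 1 := ⟨j - 1, by omega⟩
  obtain ⟨f, hf, rfl⟩ := P.extMk_surjective e (p + 2) rfl
  rw [P.extMk_eq_zero_iff f _ rfl hf p rfl]
  have hs := h Y (p + 1) hj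
  have hz : IsZero ((P.complex.linearYonedaObj ℤ Y).homology (p + 1)) :=
    (ModuleCat.isZero_of_subsingleton _).of_iso (P.isoExt (R := ℤ) (p + 1) Y).symm
  rw [← HomologicalComplex.exactAt_iff_isZero_homology,
    HomologicalComplex.exactAt_iff' _ p (p + 1) (p + 2) (by simp) (by simp),
    ShortComplex.moduleCat_exact_iff] at hz
  obtain ⟨g, hg⟩ := hz f hf
  exact ⟨g, hg⟩

section Thick

variable {R : Type u} [Ring R] [HasDerivedCategory.{w} (ModuleCat.{u} R)]
  {D : Set (DerivedCategory (ModuleCat.{u} R))}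

/-- Modules whose stalk complex is in `D`. -/
def StalkMem (D : Set (DerivedCategory (ModuleCat.{u} R))) (N : Type u) [AddCommGroup N]
    [Module R N] : Prop :=
  (DerivedCategory.singleFunctor (ModuleCat.{u} R) 0).obj (ModuleCat.of R N) ∈ D

theorem StalkMem.of_linearEquiv (hD : IsThickSubcategory D) {A B : Type u} [AddCommGroup A]
    [Module R A] [AddCommGroup B] [Module R B] (e : A ≃ₗ[R] B) (hA : StalkMem D A) :
    StalkMem D B :=
  hD.mem_of_iso ((DerivedCategory.singleFunctor (ModuleCat.{u} R) 0).mapIso e.toModuleIso) hA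

theorem stalk_zero (hD : IsThickSubcategory D) {M : ModuleCat.{u} R} (hM : IsZero M) :
    (DerivedCategory.singleFunctor (ModuleCat.{u} R) 0).obj M ∈ D :=
  hD.mem_of_iso ((Functor.map_isZero _ hM).iso (isZero_zero _)).symm hD.zero_mem

theorem shortExact_of_linear {A B C : Type u} [AddCommGroup A] [Module R A] [AddCommGroup B]
    [Module R B] [AddCommGroup C] [Module R C] (f : A →ₗ[R] B) (g : B →ₗ[R] C)
    (hf : Function.Injective f) (hg : Function.Surjective g) (h : Function.Exact f g) :
    (ShortComplex.mk (ModuleCat.ofHom f) (ModuleCat.ofHom g)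
      (by ext x; exact h.apply_apply_eq_zero x)).ShortExact where
  exact := by
    rw [ShortComplex.moduleCat_exact_iff]
    intro x hx
    exact (h x).1 hx
  mono_f := (ModuleCat.mono_iff_injective _).2 hf
  epi_g := (ModuleCat.epi_iff_surjective _).2 hg

theorem StalkMem.prod (hD : IsThickSubcategory D) {A B : Type u} [AddCommGroup A]
    [Module R A] [AddCommGroup B] [Module R B] (hA : StalkMem D A) (hB : StalkMem D B) :
    StalkMem D (A × B) :=
  hD.ext₂ _ (shortExact_of_linear (LinearMap.inl R A B) (LinearMap.snd R A B)
    LinearMap.inl_injective LinearMap.snd_surjective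
    Function.Exact.inl_snd).singleTriangle_distinguished hA hB

theorem StalkMem.pi (hD : IsThickSubcategory D) (hR : StalkMem D R) (k : ℕ) :
    StalkMem D (Fin k → R) := by
  refine Module.pi_induction' (motive := fun N _ _ ↦ StalkMem D N)
      (motive' := fun N _ _ ↦ StalkMem D N) R ?_ ?_ ?_ ?_ (fun _ : Fin k => R) (fun _ => hR)
  · exact fun e h ↦ h.of_linearEquiv hD e
  · exact fun e h ↦ h.of_linearEquiv hD e
  · exact stalk_zero hD (ModuleCat.isZero_of_subsingleton _)
  · introv hN hN'
    exact hN.prod hD hN'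

theorem stalk_mem_of_pd (hco : IsLeftCoherentRing R) (hD : IsThickSubcategory D)
    (hR : StalkMem D R) (n : ℕ) (M : ModuleCat.{u} R) (hfp : Module.FinitePresentation R M)
    (hM : HasProjectiveDimensionLT M (n + 1)) :
    (DerivedCategory.singleFunctor (ModuleCat.{u} R) 0).obj M ∈ D := by
  induction n generalizing M with
  | zero =>
    have hp : Projective M := projective_iff_hasProjectiveDimensionLT_one.2 hM
    have hp' : Module.Projective R M := (IsProjective.iff_projective (R := R) M).2 hp
    obtain ⟨k, f, g, _, _, hfg⟩ := Module.Finite.exists_comp_eq_id_of_projective R M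
    refine hD.retract_mem _ _
      ((DerivedCategory.singleFunctor (ModuleCat.{u} R) 0).map
        (ModuleCat.ofHom g : M ⟶ ModuleCat.of R (Fin k → R)))
      ((DerivedCategory.singleFunctor (ModuleCat.{u} R) 0).map
        (ModuleCat.ofHom f : ModuleCat.of R (Fin k → R) ⟶ M)) ?_ (StalkMem.pi hD hR k)
    rw [← Functor.map_comp, ← ModuleCat.ofHom_comp, hfg]
    exact CategoryTheory.Functor.map_id _ _
  | succ n ih =>
    obtain ⟨k, f, hf⟩ := Module.Finite.exists_fin' R M
    have hS := shortExact_of_linear (LinearMap.ker f).subtype f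
      (LinearMap.ker f).injective_subtype hf (LinearMap.exact_subtype_ker_map f)
    have hK : Module.FinitePresentation R (LinearMap.ker f) :=
      FGSubFP.pi hco k _ (Module.FinitePresentation.fg_ker f hf)
    have hproj : Projective (ModuleCat.of R (Fin k → R)) :=
      (IsProjective.iff_projective (R := R) (Fin k → R)).1 inferInstance
    have h1 := ih (ModuleCat.of R (LinearMap.ker f)) hK
      ((hS.hasProjectiveDimensionLT_X₃_iff n hproj).1 hM)
    exact hD.ext₂ _ (rot_of_distTriang _ hS.singleTriangle_distinguished)
      (StalkMem.pi hD hR k) (hD.shift_mem _ 1 h1)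

end Thick

/-- Proposition 3.4: over a left coherent ring `R`, if `M` is a
finitely presented module of finite projective dimension, then the complex `S⁰M`
(`M` concentrated in degree `0`) is a small object of `D(R)`. -/
theorem small_of_finPres_finite_proj_dim (R : Type u) [Ring R]
    [HasDerivedCategory.{w} (ModuleCat.{u} R)]
    (hR : IsLeftCoherentRing R) (M : ModuleCat.{u} R)
    (hfp : Module.FinitePresentation R M)
    (hpd : HasFiniteProjectiveDimension R M) :
    IsSmallObject ((DerivedCategory.singleFunctor (ModuleCat.{u} R) 0).obj M) := by
  intro D hD hRD
  obtain ⟨i, hi⟩ := hpd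
  exact stalk_mem_of_pd hR hD hRD i M hfp (hasProjectiveDimensionLT_of_ext hi)
end
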